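/- arXiv:2203.00950 — 7 statements merged into one kernel-verified Lean document; each statement's English description precedes it below -/
import Mathlib

section
/- Let X be a metric space endowed with a dynamical system (flow) Π. Let (x_n) be a sequence of points of X and (T_n) a sequence of positive real numbers such that each x_n is a periodic point of period T_n (i.e. Π(x_n, T_n) = x_n), x_n → z in X, and T_n → 0⁺. Then z is an equilibrium point, i.e. Π(z, t) = z for all t ∈ ℝ. -/
/-!
A point of period `T` also has every integer multiple of `T` as a period. As the periods shrink,
their multiples approximate any time `t`, so continuity turns `φ (x n) (k n • T n) = φ (x n) 0`
into `φ z t = φ z 0`, while `φ (x n) (T n) = x n` becomes `φ z 0 = z`.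
-/

open Filter Function Topology

section OrderedGroup

variable {G : Type*} [AddCommGroup G] [LinearOrder G] [IsOrderedAddMonoid G] [Archimedean G]

theorem exists_abs_zsmul_sub_lt {p : G} (hp : p ≠ 0) (t : G) : ∃ k : ℤ, |k • p - t| < |p| := by
  obtain ⟨k, ⟨hk_nonneg, hk_lt⟩, -⟩ := existsUnique_sub_zsmul_mem_Ico (abs_pos.mpr hp) t 0
  rw [zero_add] at hk_lt
  have hk : |k • |p| - t| < |p| := by rwa [abs_sub_comm, abs_of_nonneg hk_nonneg]
  rcases abs_choice p with habs | habs
  · exact ⟨k, by rwa [habs] at hk ⊢⟩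
  · exact ⟨-k, by rwa [neg_smul, ← smul_neg, ← habs]⟩

variable [TopologicalSpace G] [OrderTopology G] {ι : Type*} {l : Filter ι} {T : ι → G}

theorem exists_tendsto_zsmul_of_tendsto_zero (hT : Tendsto T l (𝓝[≠] 0)) (t : G) :
    ∃ k : ι → ℤ, Tendsto (fun i => k i • T i) l (𝓝 t) := by
  obtain ⟨hT_zero, hT_ne⟩ := tendsto_nhdsWithin_iff.mp hT
  choose! k hk using fun i (hi : T i ≠ 0) => exists_abs_zsmul_sub_lt hi t
  have h_abs : Tendsto (fun i => |T i|) l (𝓝 0) := by simpa only [abs_zero] using hT_zero.abs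
  have h_diff : Tendsto (fun i => |k i • T i - t|) l (𝓝 0) :=
    tendsto_of_tendsto_of_tendsto_of_le_of_le' tendsto_const_nhds h_abs
      (.of_forall fun _ => abs_nonneg _) (hT_ne.mono fun i hi => (hk i hi).le)
  exact ⟨k, tendsto_sub_nhds_zero_iff.mp ((tendsto_zero_iff_abs_tendsto_zero _).mpr h_diff)⟩

variable [l.NeBot] {X Y : Type*} [TopologicalSpace X] [TopologicalSpace Y] [T2Space Y]

theorem apply_eq_apply_zero_of_tendsto_periodic {f : X → G → Y} (hf : Continuous (uncurry f))
    {x : ι → X} {z : X} (hx : Tendsto x l (𝓝 z)) (hT : Tendsto T l (𝓝[≠] 0))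
    (hper : ∀ᶠ i in l, Periodic (f (x i)) (T i)) (t : G) : f z t = f z 0 := by
  obtain ⟨k, hk⟩ := exists_tendsto_zsmul_of_tendsto_zero hT t
  have h_mul : Tendsto (fun i => f (x i) (k i • T i)) l (𝓝 (f z t)) :=
    (hf.tendsto (z, t)).comp (hx.prodMk_nhds hk)
  have h_zero : Tendsto (fun i => f (x i) 0) l (𝓝 (f z 0)) :=
    (hf.tendsto (z, 0)).comp (hx.prodMk_nhds tendsto_const_nhds)
  exact tendsto_nhds_unique_of_eventuallyEq h_mul h_zero
    (hper.mono fun i hi => hi.zsmul_eq (k i))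

end OrderedGroup

theorem periodic_of_apply_eq_self {X G : Type*} [AddCommMagma G] {φ : X → G → X}
    (hadd : ∀ x s t, φ (φ x s) t = φ x (s + t)) {x : X} {T : G} (hx : φ x T = x) :
    Periodic (φ x) T := fun s => by
  rw [add_comm, ← hadd, hx]

theorem apply_zero_eq_self_of_tendsto {X G ι : Type*} [TopologicalSpace X] [T2Space X]
    [TopologicalSpace G] [Zero G] {φ : X → G → X} (hcont : Continuous (uncurry φ))
    {l : Filter ι} [l.NeBot] {x : ι → X} {T : ι → G} {z : X} (hx : Tendsto x l (𝓝 z))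
    (hT : Tendsto T l (𝓝 0)) (hfix : ∀ᶠ i in l, φ (x i) (T i) = x i) : φ z 0 = z :=
  tendsto_nhds_unique_of_eventuallyEq
    ((hcont.tendsto (z, 0)).comp (hx.prodMk_nhds hT)) hx hfix

theorem periodic_points_limit_is_equilibrium_general
    {X G ι : Type*} [TopologicalSpace X] [T2Space X]
    [AddCommGroup G] [LinearOrder G] [IsOrderedAddMonoid G] [Archimedean G]
    [TopologicalSpace G] [OrderTopology G] {φ : X → G → X} (hcont : Continuous (uncurry φ))
    (hadd : ∀ x s t, φ (φ x s) t = φ x (s + t))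
    {l : Filter ι} [l.NeBot] {x : ι → X} {T : ι → G} {z : X}
    (hper : ∀ᶠ i in l, φ (x i) (T i) = x i)
    (hx : Tendsto x l (𝓝 z)) (hT : Tendsto T l (𝓝[≠] 0)) (t : G) : φ z t = z :=
  calc
    φ z t = φ z 0 := apply_eq_apply_zero_of_tendsto_periodic hcont hx hT
      (hper.mono fun _ => periodic_of_apply_eq_self hadd) t
    _ = z := apply_zero_eq_self_of_tendsto hcont hx (tendsto_nhds_of_tendsto_nhdsWithin hT) hper

/-- If a flow on a metric space has a sequence of periodic points
`x n` with positive periods `T n`, with `x n → z` and `T n → 0⁺`, then `z` is an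
equilibrium point. -/
theorem periodic_points_limit_is_equilibrium
    {X : Type*} [MetricSpace X] (φ : X → ℝ → X)
    (hcont : Continuous fun p : X × ℝ => φ p.1 p.2)
    (h0 : ∀ x : X, φ x 0 = x)
    (hadd : ∀ (x : X) (s t : ℝ), φ (φ x s) t = φ x (s + t))
    (x : ℕ → X) (T : ℕ → ℝ) (z : X)
    (hTpos : ∀ n, 0 < T n)
    (hper : ∀ n, φ (x n) (T n) = x n)
    (hx : Filter.Tendsto x Filter.atTop (nhds z))
    (hT0 : Filter.Tendsto T Filter.atTop (nhds 0)) :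
    ∀ t : ℝ, φ z t = z :=
  periodic_points_limit_is_equilibrium_general hcont hadd (.of_forall hper) hx
    (tendsto_nhdsWithin_iff.mpr ⟨hT0, .of_forall fun n => (hTpos n).ne'⟩)
end

section
/- Let X be a metric space endowed with a dynamical system (flow) Π and let M ⊆ X be a nonempty compact positively invariant set. If M has the fixed point property, then M contains an equilibrium point, i.e. there exists z ∈ M with Π(z,t) = z for all t ∈ ℝ. -/
/-!
For every `s > 0` the time-`s` map sends `M` to itself, hence has a fixed point in `M`. Let `s`
tend to `0`: by compactness these fixed points accumulate at some `z ∈ M`. For `t ≥ 0`, the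
multiple `⌊t / s⌋₊ * s` of the period tends to `t`, so in the limit `z` is fixed by the time-`t`
map.
-/

open Filter Function Set Topology

section FixedPoints

variable {T X : Type*} [TopologicalSpace T] [AddMonoid T] [TopologicalSpace X] (φ : Flow T X)

theorem isFixedPt_flow_nsmul {s : T} {x : X} (hx : IsFixedPt (φ s) x) (n : ℕ) :
    IsFixedPt (φ (n • s)) x := by
  induction n with
  | zero => rw [zero_nsmul]; exact φ.map_zero_apply x
  | succ n ih => rw [IsFixedPt, succ_nsmul, φ.map_add, hx.eq, ih.eq]

theorem isFixedPt_flow_of_add_eq_zero {s t : T} {x : X} (hx : IsFixedPt (φ s) x) (hts : t + s = 0) :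
    IsFixedPt (φ t) x :=
  calc φ t x = φ t (φ s x) := by rw [hx.eq]
    _ = φ (t + s) x := (φ.map_add t s x).symm
    _ = x := by rw [hts, φ.map_zero_apply]

end FixedPoints

section Periods

-- A semifield of times with `ExistsAddOfLE` covers both flows (`ℝ`) and semiflows (`ℝ≥0`).
variable {τ X : Type*} [Semifield τ] [LinearOrder τ] [IsStrictOrderedRing τ] [ExistsAddOfLE τ]
  [FloorSemiring τ] [TopologicalSpace τ] [OrderTopology τ] [TopologicalSpace X]

theorem tendsto_natFloor_div_mul_nhdsGT_zero {t : τ} (ht : 0 ≤ t) :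
    Tendsto (fun s : τ => ⌊t / s⌋₊ * s) (𝓝[>] 0) (𝓝 t) := by
  refine tendsto_order.2 ⟨fun a hat => ?_, fun b htb => ?_⟩
  · obtain ⟨d, hd, rfl⟩ := exists_pos_add_of_lt' hat
    filter_upwards [Ioo_mem_nhdsGT hd] with s ⟨hs, hsd⟩
    have lt_next_multiple : a + d < ⌊(a + d) / s⌋₊ * s + s := by
      simpa only [add_one_mul] using (div_lt_iff₀ hs).1 (Nat.lt_floor_add_one ((a + d) / s))
    exact lt_of_add_lt_add_right (lt_next_multiple.trans (by gcongr))
  · filter_upwards [self_mem_nhdsWithin] with s (hs : 0 < s)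
    exact ((le_div_iff₀ hs).1 (Nat.floor_le (div_nonneg ht hs.le))).trans_lt htb

theorem isFixedPt_flow_of_tendsto_of_period_tendsto_zero [T2Space X] (φ : Flow τ X)
    {ι : Type*} {l : Filter ι} [l.NeBot] {s : ι → τ} {x : ι → X} {z : X}
    (hs : Tendsto s l (𝓝[>] 0)) (hx : Tendsto x l (𝓝 z))
    (hfix : ∀ᶠ i in l, IsFixedPt (φ (s i)) (x i)) (t : τ) : IsFixedPt (φ t) z := by
  have fixed_of_nonneg {t : τ} (ht : 0 ≤ t) : IsFixedPt (φ t) z := by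
    have hlim : Tendsto (fun i => φ (⌊t / s i⌋₊ * s i) (x i)) l (𝓝 (φ t z)) :=
      (φ.cont'.tendsto (t, z)).comp
        (((tendsto_natFloor_div_mul_nhdsGT_zero ht).comp hs).prodMk_nhds hx)
    refine tendsto_nhds_unique (hlim.congr' ?_) hx
    filter_upwards [hfix] with i hi
    simpa only [nsmul_eq_mul] using (isFixedPt_flow_nsmul φ hi ⌊t / s i⌋₊).eq
  rcases le_total 0 t with ht | ht
  · exact fixed_of_nonneg ht
  · obtain ⟨s, hs, hts⟩ := exists_nonneg_add_of_le ht
    exact isFixedPt_flow_of_add_eq_zero φ (fixed_of_nonneg hs) hts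

theorem equilibrium_in_compact_invariant_FPP_set_general [T2Space X] (φ : Flow τ X)
    {K : Set X} (hK : IsCompact K)
    (hfix : ∃ᶠ s in 𝓝[>] (0 : τ), ∃ x ∈ K, IsFixedPt (φ s) x) :
    ∃ z ∈ K, ∀ t, IsFixedPt (φ t) z := by
  have : Nonempty X := hfix.exists.elim fun _ ⟨x, _⟩ => ⟨x⟩
  have : NeBot (𝓝[>] (0 : τ) ⊓ 𝓟 {s | ∃ x ∈ K, IsFixedPt (φ s) x}) :=
    frequently_iff_neBot.1 hfix
  have hperiods : ∀ᶠ s in 𝓝[>] (0 : τ) ⊓ 𝓟 {s | ∃ x ∈ K, IsFixedPt (φ s) x},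
      ∃ x ∈ K, IsFixedPt (φ s) x :=
    mem_inf_of_right (mem_principal_self _)
  obtain ⟨x, hx⟩ := hperiods.choice
  obtain ⟨z, hzK, hz⟩ := hK.exists_mapClusterPt_of_frequently (hx.mono fun _ h => h.1).frequently
  obtain ⟨U, hU, hxz⟩ := mapClusterPt_iff_ultrafilter.1 hz
  have hU0 : Tendsto id (U : Filter τ) (𝓝[>] 0) := hU.trans inf_le_left
  exact ⟨z, hzK, isFixedPt_flow_of_tendsto_of_period_tendsto_zero φ hU0 hxz
    (hU (hx.mono fun _ h => h.2))⟩

end Periods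

theorem exists_isFixedPt_of_mapsTo_of_fixedPointProperty {X : Type*} [TopologicalSpace X]
    {M : Set X} (hM : ∀ ψ : M → M, Continuous ψ → ∃ x : M, ψ x = x) {f : X → X}
    (hf : ContinuousOn f M) (hmaps : MapsTo f M M) : ∃ x ∈ M, IsFixedPt f x := by
  obtain ⟨x, hx⟩ := hM (hmaps.restrict f M M) (hf.mapsToRestrict hmaps)
  exact ⟨x, x.2, congrArg Subtype.val hx⟩

/-- A nonempty compact positively invariant set with the fixed point
property, for a flow on a metric space, contains an equilibrium point. -/
theorem equilibrium_in_compact_invariant_FPP_set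
    {X : Type*} [MetricSpace X] (φ : X → ℝ → X)
    (hcont : Continuous fun p : X × ℝ => φ p.1 p.2)
    (h0 : ∀ x : X, φ x 0 = x)
    (hadd : ∀ (x : X) (s t : ℝ), φ (φ x s) t = φ x (s + t))
    (M : Set X) (hne : M.Nonempty) (hcomp : IsCompact M)
    (hpos : ∀ x ∈ M, ∀ t : ℝ, 0 ≤ t → φ x t ∈ M)
    (hfpp : ∀ ψ : M → M, Continuous ψ → ∃ x : M, ψ x = x) :
    ∃ z ∈ M, ∀ t : ℝ, φ z t = z := by
  let Φ : Flow ℝ X :=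
    { toFun t x := φ x t
      cont' := hcont.comp continuous_swap
      map_add' s t x := by rw [hadd, add_comm]
      map_zero' := h0 }
  have fixed_time_map {t : ℝ} (ht : 0 < t) : ∃ x ∈ M, IsFixedPt (Φ t) x :=
    exists_isFixedPt_of_mapsTo_of_fixedPointProperty hfpp (Φ.continuous_toFun t).continuousOn
      fun x hx => hpos x hx t ht.le
  have fixed_eventually : ∀ᶠ t in 𝓝[>] (0 : ℝ), ∃ x ∈ M, IsFixedPt (Φ t) x :=
    eventually_mem_nhdsWithin.mono fun _ => fixed_time_map
  exact equilibrium_in_compact_invariant_FPP_set_general Φ hcomp fixed_eventually.frequently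
end

section
/- Let C ⊂ ℝ^N be a nonempty, closed, bounded and convex set, and let f : ℝ^N → ℝ^N be continuous. Suppose that for every outer normal field ν : ∂C → S^{N−1} it holds that ⟨f(x), ν(x)⟩ ≤ 0 for all x ∈ ∂C. Then there exists z ∈ C with f(z) = 0. -/
open scoped RealInnerProductSpace

/-!
Hartman and Stampacchia's variational inequality, obtained by applying Brouwer's theorem to
`x ↦ P (x + f x)` with `P` the nearest point projection onto `C`, yields `z ∈ C` with
`⟪f z, u - z⟫ ≤ 0` for all `u ∈ C`. If `f z ≠ 0`, then `z` is a boundary point and `f z / ‖f z‖` is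
an outer normal there, so some outer normal field takes this value at `z`, contradicting the
hypothesis.

Brouwer's theorem rests on Milnor's argument, as simplified by Rogers. If `g` is `C¹` and vanishes
on the frontier of a bounded open set `U`, then for small `t` the map `x ↦ x + t • g x` permutes
`U`, so the integral over `U` of its Jacobian is the volume of `U`. The integral is a polynomial
in `t`, hence has this value for `t = 1` too. For a retraction of the ball onto the sphere the
Jacobian vanishes identically.
-/

open Module Metric MeasureTheory Set

section Determinant

theorem exists_polynomial_eval_eq_det_one_add_smul {K M : Type*} [Field K] [AddCommGroup M]
    [Module K M] [FiniteDimensional K M] (A : M →ₗ[K] M) :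
    ∃ p : Polynomial K, p.natDegree ≤ finrank K M ∧ ∀ t, p.eval t = LinearMap.det (1 + t • A) := by
  let b := finBasis K M
  let B := LinearMap.toMatrix b b A
  refine ⟨((Polynomial.X : Polynomial K) • B.map Polynomial.C +
    (1 : Matrix _ _ K).map Polynomial.C).det, ?_, fun t => ?_⟩
  · simpa only [Fintype.card_fin] using Polynomial.natDegree_det_X_add_C_le B 1
  · rw [← LinearMap.det_toMatrix b, ← Polynomial.coe_evalRingHom, RingHom.map_det]
    congr 1
    ext i j
    rcases eq_or_ne i j with rfl | hij
    · simpa [B] using (add_comm _ _).trans (congrArg (1 + ·) (mul_comm _ _))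
    · simpa [B, hij] using mul_comm _ _

theorem det_one_add_smul_eq_eval_interpolate {K M : Type*} [Field K] [DecidableEq K]
    [AddCommGroup M] [Module K M] [FiniteDimensional K M] (A : M →ₗ[K] M) {s : Finset K}
    (hs : finrank K M < s.card) (t : K) :
    LinearMap.det (1 + t • A) =
      (Lagrange.interpolate s id fun i => LinearMap.det (1 + i • A)).eval t := by
  obtain ⟨p, hp_deg, hp⟩ := exists_polynomial_eval_eq_det_one_add_smul A
  have hp_lt : p.degree < s.card :=
    Polynomial.degree_le_natDegree.trans_lt (by exact_mod_cast hp_deg.trans_lt hs)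
  simp only [← hp]
  exact congrArg (Polynomial.eval t) (Lagrange.eq_interpolate (injOn_id _) hp_lt)

variable {E : Type*} [NormedAddCommGroup E] [NormedSpace ℝ E] [FiniteDimensional ℝ E]

theorem det_one_add_pos_of_norm_lt_one {A : E →L[ℝ] E} (hA : ‖A‖ < 1) : 0 < (1 + A).det := by
  have : CompleteSpace E := FiniteDimensional.complete ℝ E
  have det_ne_zero : ∀ t ∈ Icc (0 : ℝ) 1, (1 + t • A).det ≠ 0 := by
    intro t ht
    have norm_lt : ‖-(t • A)‖ < 1 := by
      rw [norm_neg, norm_smul, Real.norm_of_nonneg ht.1]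
      exact (mul_le_of_le_one_left (norm_nonneg A) ht.2).trans_lt hA
    have isUnit_one_add : IsUnit (1 + t • A) := by simpa using isUnit_one_sub_of_norm_lt_one norm_lt
    exact (LinearMap.isUnit_det _
      (isUnit_one_add.map ContinuousLinearMap.toLinearMapRingHom)).ne_zero
  have det_continuous : Continuous fun t : ℝ => (1 + t • A).det :=
    ContinuousLinearMap.continuous_det.comp (by fun_prop)
  have det_zero : (1 + (0 : ℝ) • A).det = 1 := by
    rw [zero_smul ℝ A, add_zero]
    exact LinearMap.det_id
  by_contra! hle
  have zero_mem : (0 : ℝ) ∈ Icc (1 + (1 : ℝ) • A).det (1 + (0 : ℝ) • A).det := by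
    rw [det_zero, one_smul]
    exact ⟨hle, zero_le_one⟩
  obtain ⟨t, ht, det_eq_zero⟩ :=
    intermediate_value_Icc' zero_le_one det_continuous.continuousOn zero_mem
  exact det_ne_zero t ht det_eq_zero

end Determinant

section LipschitzPerturbation

theorem nonempty_inter_frontier_of_isPreconnected {X : Type*} [TopologicalSpace X] {s t : Set X}
    (ht : IsPreconnected t) (hs : (t ∩ s).Nonempty) (hsc : (t ∩ sᶜ).Nonempty) :
    (t ∩ frontier s).Nonempty := by
  obtain ⟨x, hxt, hxs⟩ := hs
  obtain ⟨y, hyt, hys⟩ := hsc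
  by_contra! hdisj
  have mem_interior_of_mem_closure : ∀ z ∈ t, z ∈ closure s → z ∈ interior s := by
    intro z hzt hz
    by_contra hz'
    exact (hdisj ▸ ⟨hzt, hz, hz'⟩ : z ∈ (∅ : Set X))
  have hcover : t ⊆ interior s ∪ (closure s)ᶜ := fun z hz =>
    (em (z ∈ closure s)).imp_left (mem_interior_of_mem_closure z hz)
  have hsub : t ⊆ interior s := ht.subset_left_of_subset_union isOpen_interior
    isClosed_closure.isOpen_compl (disjoint_compl_right.mono_left interior_subset_closure) hcover
    ⟨x, hxt, mem_interior_of_mem_closure x hxt (subset_closure hxs)⟩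
  exact hys (interior_subset (hsub hyt))

theorem lipschitzWith_indicator_of_eqOn_frontier {E F : Type*} [SeminormedAddCommGroup E]
    [NormedSpace ℝ E] [SeminormedAddCommGroup F] {K : NNReal} {g : E → F} {U : Set E}
    (hg : LipschitzOnWith K g (closure U)) (hg_zero : EqOn g 0 (frontier U)) :
    LipschitzWith K (U.indicator g) := by
  have dist_le_of_notMem : ∀ x ∈ U, ∀ y ∉ U, dist (g x) 0 ≤ K * dist x y := by
    intro x hx y hy
    obtain ⟨z, hz, hz_frontier⟩ := nonempty_inter_frontier_of_isPreconnected
      (convex_segment x y).isPreconnected ⟨x, left_mem_segment ℝ x y, hx⟩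
      ⟨y, right_mem_segment ℝ x y, hy⟩
    calc dist (g x) 0 = dist (g x) (g z) := by rw [hg_zero hz_frontier, Pi.zero_apply]
      _ ≤ K * dist x z :=
        hg.dist_le_mul x (subset_closure hx) z (frontier_subset_closure hz_frontier)
      _ ≤ K * dist x y := by
        gcongr
        linarith [dist_add_dist_of_mem_segment hz, dist_nonneg (x := z) (y := y)]
  refine LipschitzWith.of_dist_le_mul fun x y => ?_
  by_cases hx : x ∈ U <;> by_cases hy : y ∈ U
  · simpa only [indicator_of_mem, hx, hy] using
      hg.dist_le_mul x (subset_closure hx) y (subset_closure hy)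
  · simpa only [indicator_of_mem hx, indicator_of_notMem hy] using dist_le_of_notMem x hx y hy
  · simpa only [indicator_of_mem hy, indicator_of_notMem hx, dist_comm] using
      dist_le_of_notMem y hy x hx
  · simp only [indicator_of_notMem hx, indicator_of_notMem hy, dist_self]
    positivity

theorem bijective_id_add_of_lipschitzWith_lt_one {E : Type*} [NormedAddCommGroup E]
    [CompleteSpace E] {K : NNReal} {g : E → E} (hg : LipschitzWith K g) (hK : K < 1) :
    Function.Bijective fun x => x + g x := by
  refine ⟨(AntilipschitzWith.id.add_lipschitzWith hg (by rwa [inv_one])).injective, fun y => ?_⟩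
  have hcontract : ContractingWith K fun x => y - g x :=
    ⟨hK, by simpa using (LipschitzWith.const y).sub hg⟩
  exact ⟨_, add_eq_of_eq_sub hcontract.fixedPoint_isFixedPt.symm⟩

theorem image_eq_self_of_bijective_of_eqOn_compl {α : Type*} {φ : α → α} {U : Set α}
    (hφ : Function.Bijective φ) (hU : EqOn φ id Uᶜ) : φ '' U = U := by
  rw [← compl_inj_iff, ← image_compl_eq hφ, hU.image_eq, image_id]

end LipschitzPerturbation

theorem integral_det_one_add_smul_eq_of_infinite {α E : Type*} [MeasurableSpace α]
    {μ : Measure α} [NormedAddCommGroup E] [NormedSpace ℝ E] [FiniteDimensional ℝ E]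
    {A : α → E →L[ℝ] E} (hA : ∀ t : ℝ, Integrable (fun x => (1 + t • A x).det) μ)
    {S : Set ℝ} (hS : S.Infinite) {c : ℝ} (hc : ∀ t ∈ S, ∫ x, (1 + t • A x).det ∂μ = c) (t : ℝ) :
    ∫ x, (1 + t • A x).det ∂μ = c := by
  obtain ⟨s, hsS, hs_card⟩ := hS.exists_subset_card_eq (finrank ℝ E + 1)
  have det_eq_sum : ∀ x, (1 + t • A x).det =
      ∑ i ∈ s, (1 + i • A x).det * (Lagrange.basis s id i).eval t := by
    intro x
    refine (det_one_add_smul_eq_eval_interpolate (A x : E →ₗ[ℝ] E) (s := s) (by omega) t).trans ?_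
    simp only [Lagrange.interpolate_apply, Polynomial.eval_finsetSum, Polynomial.eval_mul,
      Polynomial.eval_C]
    rfl
  have sum_basis_eval : ∑ i ∈ s, (Lagrange.basis s id i).eval t = 1 := by
    rw [← Polynomial.eval_finsetSum, Lagrange.sum_basis (injOn_id _)
      (Finset.card_pos.1 (by omega)), Polynomial.eval_one]
  calc ∫ x, (1 + t • A x).det ∂μ
      = ∑ i ∈ s, (∫ x, (1 + i • A x).det ∂μ) * (Lagrange.basis s id i).eval t := by
        simp_rw [det_eq_sum, integral_finsetSum s fun i _ => (hA i).mul_const _,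
          integral_mul_const]
    _ = ∑ i ∈ s, c * (Lagrange.basis s id i).eval t :=
        Finset.sum_congr rfl fun i hi => by rw [hc i (hsS hi)]
    _ = c := by rw [← Finset.mul_sum, sum_basis_eval, mul_one]

section Milnor

variable {E : Type*} [NormedAddCommGroup E] [NormedSpace ℝ E] [FiniteDimensional ℝ E]
  [MeasurableSpace E] [BorelSpace E] (μ : Measure E) [μ.IsAddHaarMeasure]
  {U : Set E} {g : E → E}

theorem setIntegral_det_one_add_fderiv_of_lipschitzOnWith_lt_one {K : NNReal} (hU : IsOpen U)
    (hg : DifferentiableOn ℝ g U) (hg_lip : LipschitzOnWith K g (closure U)) (hK : K < 1)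
    (hg_zero : EqOn g 0 (frontier U)) :
    ∫ x in U, (1 + fderiv ℝ g x).det ∂μ = μ.real U := by
  have : CompleteSpace E := FiniteDimensional.complete ℝ E
  let φ : E → E := fun x => x + U.indicator g x
  have φ_bijective : Function.Bijective φ := bijective_id_add_of_lipschitzWith_lt_one
    (lipschitzWith_indicator_of_eqOn_frontier hg_lip hg_zero) hK
  have φ_image : φ '' U = U := image_eq_self_of_bijective_of_eqOn_compl φ_bijective
    fun x hx => by simp only [φ, indicator_of_notMem hx, add_zero, id]
  have hasFDerivAt_g : ∀ x ∈ U, HasFDerivAt g (fderiv ℝ g x) x := fun x hx =>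
    (hg.differentiableAt (hU.mem_nhds hx)).hasFDerivAt
  have hasFDerivWithinAt_φ : ∀ x ∈ U, HasFDerivWithinAt φ (1 + fderiv ℝ g x) U x := fun x hx =>
    ((hasFDerivAt_id x).add (hasFDerivAt_g x hx)).hasFDerivWithinAt.congr
      (fun y hy => by simp [φ, hy]) (by simp [φ, hx])
  have abs_det : ∀ x ∈ U, |(1 + fderiv ℝ g x).det| = (1 + fderiv ℝ g x).det := fun x hx =>
    abs_of_pos <| det_one_add_pos_of_norm_lt_one <|
      ((hasFDerivAt_g x hx).le_of_lipschitzOn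
        (Filter.mem_of_superset (hU.mem_nhds hx) subset_closure) hg_lip).trans_lt hK
  calc ∫ x in U, (1 + fderiv ℝ g x).det ∂μ = ∫ x in U, |(1 + fderiv ℝ g x).det| • (1 : ℝ) ∂μ :=
        setIntegral_congr_fun hU.measurableSet fun x hx => by
          rw [abs_det x hx, smul_eq_mul, mul_one]
    _ = ∫ _ in φ '' U, (1 : ℝ) ∂μ := (integral_image_eq_integral_abs_det_fderiv_smul μ
        hU.measurableSet hasFDerivWithinAt_φ φ_bijective.injective.injOn fun _ => 1).symm
    _ = μ.real U := by rw [φ_image, setIntegral_const, smul_eq_mul, mul_one]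

theorem setIntegral_det_one_add_fderiv (hU : IsOpen U) (hU_bdd : Bornology.IsBounded U)
    (hg : ContDiff ℝ 1 g) (hg_zero : EqOn g 0 (frontier U)) :
    ∫ x in U, (1 + fderiv ℝ g x).det ∂μ = μ.real U := by
  obtain ⟨R, hR⟩ := hU_bdd.closure.subset_closedBall 0
  obtain ⟨K, hK⟩ : ∃ K, LipschitzOnWith K g (closedBall 0 R) :=
    hg.contDiffOn.exists_lipschitzOnWith one_ne_zero (convex_closedBall _ _)
      (isCompact_closedBall _ _)
  have small_t : ∀ t ∈ Ioo (0 : ℝ) (1 / (K + 1)),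
      ∫ x in U, (1 + t • fderiv ℝ g x).det ∂μ = μ.real U := by
    intro t ht
    have lt_one : ‖t‖₊ * K < 1 := by
      rw [← NNReal.coe_lt_coe, NNReal.coe_mul, coe_nnnorm, Real.norm_of_nonneg ht.1.le,
        NNReal.coe_one]
      calc t * K ≤ t * (K + 1) := mul_le_mul_of_nonneg_left (le_add_of_nonneg_right zero_le_one)
            ht.1.le
        _ < 1 := (lt_div_iff₀ (by positivity)).1 ht.2
    have h := setIntegral_det_one_add_fderiv_of_lipschitzOnWith_lt_one μ hU
      ((hg.differentiable one_ne_zero).const_smul t).differentiableOn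
      ((lipschitzWith_smul t).comp_lipschitzOnWith (hK.mono hR)) lt_one
      (fun x hx => by simp [hg_zero hx])
    simpa only [fderiv_const_smul (hg.differentiable one_ne_zero _)] using h
  have det_integrableOn : ∀ t : ℝ, IntegrableOn (fun x => (1 + t • fderiv ℝ g x).det) U μ := by
    intro t
    have := hg.continuous_fderiv one_ne_zero
    have det_continuous : Continuous fun x => (1 + t • fderiv ℝ g x).det :=
      ContinuousLinearMap.continuous_det.comp (by fun_prop)
    exact (det_continuous.continuousOn.integrableOn_compact (isCompact_closedBall 0 R)).mono_set
      (subset_closure.trans hR)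
  simpa only [one_smul] using integral_det_one_add_smul_eq_of_infinite det_integrableOn
    (Ioo_infinite (by positivity)) small_t 1

theorem setIntegral_det_fderiv_of_eqOn_frontier (hU : IsOpen U) (hU_bdd : Bornology.IsBounded U)
    {f : E → E} (hf : ContDiff ℝ 1 f) (hf_id : EqOn f id (frontier U)) :
    ∫ x in U, (fderiv ℝ f x).det ∂μ = μ.real U := by
  have fderiv_eq : ∀ x, fderiv ℝ f x = 1 + fderiv ℝ (f - id) x := by
    intro x
    rw [fderiv_sub (hf.differentiable one_ne_zero x) differentiableAt_id, fderiv_id,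
      ← ContinuousLinearMap.one_def, add_sub_cancel]
  calc ∫ x in U, (fderiv ℝ f x).det ∂μ = ∫ x in U, (1 + fderiv ℝ (f - id) x).det ∂μ := by
        congr 1 with x
        rw [fderiv_eq]
    _ = μ.real U := setIntegral_det_one_add_fderiv μ hU hU_bdd (hf.sub contDiff_id)
        fun x hx => sub_eq_zero.2 (hf_id hx)

end Milnor

section NearestPoint

variable {E : Type*} [NormedAddCommGroup E] [InnerProductSpace ℝ E] {K : Set E}

/-- The metric projection of `x` onto `K`. It is meaningful for nonempty, complete and convex `K`,
when the point of `K` closest to `x` exists and is unique; otherwise its value may be arbitrary. -/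
noncomputable def nearestPoint (K : Set E) (x : E) : E :=
  Classical.epsilon fun v => v ∈ K ∧ ‖x - v‖ = ⨅ w : K, ‖x - w‖

theorem nearestPoint_spec (hne : K.Nonempty) (hK : IsComplete K) (hconv : Convex ℝ K) (x : E) :
    nearestPoint K x ∈ K ∧ ‖x - nearestPoint K x‖ = ⨅ w : K, ‖x - w‖ :=
  Classical.epsilon_spec (exists_norm_eq_iInf_of_complete_convex hne hK hconv x)

theorem nearestPoint_mem (hne : K.Nonempty) (hK : IsComplete K) (hconv : Convex ℝ K) (x : E) :
    nearestPoint K x ∈ K :=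
  (nearestPoint_spec hne hK hconv x).1

theorem inner_sub_nearestPoint_nonpos (hK : IsComplete K) (hconv : Convex ℝ K) (x : E) {u : E}
    (hu : u ∈ K) : ⟪x - nearestPoint K x, u - nearestPoint K x⟫ ≤ 0 :=
  have hspec := nearestPoint_spec ⟨u, hu⟩ hK hconv x
  (norm_eq_iInf_iff_real_inner_le_zero hconv hspec.1).1 hspec.2 u hu

theorem nearestPoint_eq_self (hK : IsComplete K) (hconv : Convex ℝ K) {x : E} (hx : x ∈ K) :
    nearestPoint K x = x :=
  (sub_eq_zero.1 (real_inner_self_nonpos.1 (inner_sub_nearestPoint_nonpos hK hconv x hx))).symm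

theorem lipschitzWith_nearestPoint (hne : K.Nonempty) (hK : IsComplete K) (hconv : Convex ℝ K) :
    LipschitzWith 1 (nearestPoint K) := by
  refine LipschitzWith.of_dist_le_mul fun x y => ?_
  rw [dist_eq_norm, dist_eq_norm, NNReal.coe_one, one_mul]
  set p := nearestPoint K x
  set q := nearestPoint K y
  have hx : ⟪x - p, q - p⟫ ≤ 0 :=
    inner_sub_nearestPoint_nonpos hK hconv x (nearestPoint_mem hne hK hconv y)
  have hy : ⟪y - q, p - q⟫ ≤ 0 :=
    inner_sub_nearestPoint_nonpos hK hconv y (nearestPoint_mem hne hK hconv x)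
  have norm_mul_self_le : ‖p - q‖ * ‖p - q‖ ≤ ‖x - y‖ * ‖p - q‖ :=
    calc ‖p - q‖ * ‖p - q‖ = ⟪x - y, p - q⟫ + ⟪x - p, q - p⟫ + ⟪y - q, p - q⟫ := by
          rw [← real_inner_self_eq_norm_mul_norm]
          simp only [inner_sub_left, inner_sub_right]
          ring
      _ ≤ ⟪x - y, p - q⟫ := by linarith
      _ ≤ ‖x - y‖ * ‖p - q‖ := real_inner_le_norm _ _
  rcases (norm_nonneg (p - q)).eq_or_lt with h | h
  · rw [← h]
    exact norm_nonneg _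
  · exact le_of_mul_le_mul_right norm_mul_self_le h

end NearestPoint

section Brouwer

variable {E : Type*} [NormedAddCommGroup E] [InnerProductSpace ℝ E]

theorem inner_fderiv_eq_zero_of_norm_eventually_eq {F : Type*} [NormedAddCommGroup F]
    [NormedSpace ℝ F] {r : F → E} {x : F} {ρ : ℝ} (hr : DifferentiableAt ℝ r x)
    (hρ : ∀ᶠ y in nhds x, ‖r y‖ = ρ) (v : F) : ⟪r x, fderiv ℝ r x v⟫ = 0 := by
  have norm_sq_const : HasFDerivAt (fun y => ‖r y‖ ^ 2) (0 : F →L[ℝ] ℝ) x :=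
    (hasFDerivAt_const (ρ ^ 2) x).congr_of_eventuallyEq (hρ.mono fun y hy => by simp only [hy])
  simpa using DFunLike.congr_fun (hr.hasFDerivAt.norm_sq.unique norm_sq_const) v

variable [FiniteDimensional ℝ E]

theorem det_fderiv_eq_zero_of_norm_eventually_eq {r : E → E} {x : E} {ρ : ℝ}
    (hr : DifferentiableAt ℝ r x) (hρ : ∀ᶠ y in nhds x, ‖r y‖ = ρ) (hx : r x ≠ 0) :
    (fderiv ℝ r x).det = 0 := by
  by_contra hdet
  obtain ⟨v, hv⟩ := (LinearMap.equivOfDetNeZero (𝕜 := ℝ) _ hdet).surjective (r x)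
  replace hv : fderiv ℝ r x v = r x := hv
  have hinner := inner_fderiv_eq_zero_of_norm_eventually_eq hr hρ v
  rw [hv, inner_self_eq_zero] at hinner
  exact hx hinner

theorem exists_mem_ball_norm_ne_of_contDiff_of_eqOn_sphere {ρ : ℝ} (hρ : 0 < ρ) {r : E → E}
    (hr : ContDiff ℝ 1 r) (hr_sphere : EqOn r id (sphere 0 ρ)) : ∃ x ∈ ball 0 ρ, ‖r x‖ ≠ ρ := by
  by_contra! hnorm
  borelize E
  have det_eq_zero : ∀ x ∈ ball (0 : E) ρ, (fderiv ℝ r x).det = 0 := fun x hx =>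
    det_fderiv_eq_zero_of_norm_eventually_eq (hr.differentiable one_ne_zero x)
      (Filter.eventually_of_mem (isOpen_ball.mem_nhds hx) hnorm)
      (norm_ne_zero_iff.1 (hnorm x hx ▸ hρ.ne'))
  have volume_eq := setIntegral_det_fderiv_of_eqOn_frontier (volume : Measure E) isOpen_ball
    isBounded_ball hr (by rwa [frontier_ball 0 hρ.ne'])
  rw [setIntegral_congr_fun measurableSet_ball det_eq_zero, integral_zero] at volume_eq
  exact (ENNReal.toReal_pos (measure_ball_pos volume 0 hρ).ne' measure_ball_lt_top.ne).ne volume_eq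

theorem exists_eq_zero_of_contDiff_of_eqOn_sphere {ρ : ℝ} (hρ : 0 < ρ) {F : E → E}
    (hF : ContDiff ℝ 1 F) (hF_sphere : EqOn F id (sphere 0 ρ)) : ∃ x, F x = 0 := by
  by_contra! hF_ne
  have hr : ContDiff ℝ 1 fun x => (ρ * ‖F x‖⁻¹) • F x :=
    (contDiff_const.mul ((hF.norm ℝ hF_ne).inv fun x => norm_ne_zero_iff.2 (hF_ne x))).smul hF
  have hr_norm : ∀ x, ‖(ρ * ‖F x‖⁻¹) • F x‖ = ρ := by
    intro x
    rw [norm_smul, norm_mul, norm_inv, norm_norm, Real.norm_of_nonneg hρ.le,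
      inv_mul_cancel_right₀ (norm_ne_zero_iff.2 (hF_ne x))]
  obtain ⟨x, -, hx⟩ := exists_mem_ball_norm_ne_of_contDiff_of_eqOn_sphere hρ hr fun x hx => by
    rw [hF_sphere hx, id, mem_sphere_zero_iff_norm.1 hx, mul_inv_cancel₀ hρ.ne', one_smul]
  exact hx (hr_norm x)

theorem exists_eq_zero_of_continuous_of_eqOn_compl_closedBall {R : ℝ} {F : E → E}
    (hF : Continuous F) (hF_id : EqOn F id (closedBall 0 R)ᶜ) : ∃ x, F x = 0 := by
  by_contra! hF_ne
  have hρ : 0 < max R 0 + 1 := by positivity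
  have sphere_subset : sphere (0 : E) (max R 0 + 1) ⊆ (closedBall 0 R)ᶜ := by
    intro x hx
    rw [mem_sphere_zero_iff_norm] at hx
    rw [mem_compl_iff, mem_closedBall_zero_iff, hx, not_le]
    exact (le_max_left R 0).trans_lt (lt_add_one _)
  obtain ⟨G, hG, hG_dist, hG_sphere, -⟩ := hF.exists_contDiff_approx_and_eqOn 1 hF.norm
    (fun x => norm_pos_iff.2 (hF_ne x)) isClosed_sphere
    (isClosed_closedBall.isOpen_compl.mem_nhdsSet.2 sphere_subset)
    (contDiff_id.contDiffOn.congr hF_id)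
  obtain ⟨x, hx⟩ := exists_eq_zero_of_contDiff_of_eqOn_sphere hρ hG
    (hG_sphere.trans (hF_id.mono sphere_subset))
  simpa [hx] using hG_dist x

theorem exists_isFixedPt_of_continuous_of_isBounded_range {G : E → E} (hG : Continuous G)
    (hG_bdd : Bornology.IsBounded (range G)) : ∃ x, Function.IsFixedPt G x := by
  obtain ⟨R, hR, hGR⟩ := hG_bdd.exists_pos_norm_le
  let χ : ContDiffBump (0 : E) := ⟨R, R + 1, hR, lt_add_one R⟩
  have hF : Continuous fun x => x - χ x • G x := continuous_id.sub (χ.continuous.smul hG)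
  obtain ⟨x, hx⟩ := exists_eq_zero_of_continuous_of_eqOn_compl_closedBall (R := R + 1) hF
    fun x hx => by
      have hχ : χ x = 0 := χ.zero_of_le_dist (not_le.1 fun h => hx (mem_closedBall.2 h)).le
      rw [hχ, zero_smul, sub_zero, id]
  have hx_eq : x = χ x • G x := sub_eq_zero.1 hx
  have hx_norm : ‖x‖ ≤ R := by
    calc ‖x‖ = χ x * ‖G x‖ := by rw [← Real.norm_of_nonneg χ.nonneg, ← norm_smul, ← hx_eq]
      _ ≤ 1 * R := by
        gcongr
        exacts [χ.le_one, hGR _ (mem_range_self x)]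
      _ = R := one_mul R
  have hχ : χ x = 1 := χ.one_of_mem_closedBall (mem_closedBall_zero_iff.2 hx_norm)
  exact ⟨x, by rw [hχ, one_smul] at hx_eq; exact hx_eq.symm⟩

theorem exists_isFixedPt_of_isCompact_of_convex {K : Set E} (hne : K.Nonempty) (hK : IsCompact K)
    (hconv : Convex ℝ K) {f : E → E} (hf : ContinuousOn f K) (hfK : MapsTo f K K) :
    ∃ x ∈ K, Function.IsFixedPt f x := by
  have mem_K := nearestPoint_mem hne hK.isComplete hconv
  have hcont : Continuous fun x => f (nearestPoint K x) :=
    hf.comp_continuous (lipschitzWith_nearestPoint hne hK.isComplete hconv).continuous mem_K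
  have hbdd : Bornology.IsBounded (range fun x => f (nearestPoint K x)) :=
    hK.isBounded.subset (range_subset_iff.2 fun x => hfK (mem_K x))
  obtain ⟨x, hx⟩ := exists_isFixedPt_of_continuous_of_isBounded_range hcont hbdd
  replace hx : f (nearestPoint K x) = x := hx
  have hxK : x ∈ K := hx ▸ hfK (mem_K x)
  rw [nearestPoint_eq_self hK.isComplete hconv hxK] at hx
  exact ⟨x, hxK, hx⟩

theorem exists_forall_inner_sub_nonpos_of_isCompact_of_convex {K : Set E} (hne : K.Nonempty)
    (hK : IsCompact K) (hconv : Convex ℝ K) {f : E → E} (hf : ContinuousOn f K) :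
    ∃ z ∈ K, ∀ u ∈ K, ⟪f z, u - z⟫ ≤ 0 := by
  obtain ⟨z, hzK, hz⟩ := exists_isFixedPt_of_isCompact_of_convex hne hK hconv
    (f := fun x => nearestPoint K (x + f x))
    ((lipschitzWith_nearestPoint hne hK.isComplete hconv).continuous.comp_continuousOn
      (continuousOn_id.add hf))
    fun x _ => nearestPoint_mem hne hK.isComplete hconv _
  replace hz : nearestPoint K (z + f z) = z := hz
  refine ⟨z, hzK, fun u hu => ?_⟩
  simpa only [hz, add_sub_cancel_left] using
    inner_sub_nearestPoint_nonpos hK.isComplete hconv (z + f z) hu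

end Brouwer

section OuterNormal

variable {E : Type*} [NormedAddCommGroup E] [InnerProductSpace ℝ E] {C : Set E}

/-- `n` is an outer unit normal to `C` at `x`, as in the definition of an outer normal field. -/
def IsOuterUnitNormal (C : Set E) (x n : E) : Prop :=
  ‖n‖ = 1 ∧ ∀ u ∈ C, ⟪u - x, n⟫ ≤ 0

theorem isOuterUnitNormal_inv_norm_smul {x v : E} (hv : v ≠ 0) (h : ∀ u ∈ C, ⟪v, u - x⟫ ≤ 0) :
    IsOuterUnitNormal C x (‖v‖⁻¹ • v) := by
  refine ⟨norm_smul_inv_norm (𝕜 := ℝ) hv, fun u hu => ?_⟩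
  rw [inner_smul_right, real_inner_comm]
  exact mul_nonpos_of_nonneg_of_nonpos (by positivity) (h u hu)

theorem eq_zero_of_mem_interior_of_forall_inner_nonpos {x v : E} (hx : x ∈ interior C)
    (h : ∀ u ∈ C, ⟪v, u - x⟫ ≤ 0) : v = 0 := by
  have hmax : IsLocalMax (innerSL ℝ v) x := by
    filter_upwards [mem_interior_iff_mem_nhds.1 hx] with u hu
    simpa [inner_sub_right] using h u hu
  have := hmax.hasFDerivAt_eq_zero (innerSL ℝ v).hasFDerivAt
  simpa using DFunLike.congr_fun this v

theorem isOuterUnitNormal_of_tendsto {ι : Type*} {l : Filter ι} [l.NeBot] {x n : ι → E} {a m : E}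
    (hx : Filter.Tendsto x l (nhds a)) (hn : Filter.Tendsto n l (nhds m))
    (h : ∀ i, IsOuterUnitNormal C (x i) (n i)) : IsOuterUnitNormal C a m :=
  ⟨tendsto_nhds_unique hn.norm (by simp only [(h _).1, tendsto_const_nhds]), fun u hu =>
    le_of_tendsto' ((tendsto_const_nhds.sub hx).inner hn) fun i => (h i).2 u hu⟩

variable [FiniteDimensional ℝ E]

theorem exists_isOuterUnitNormal (hC : IsClosed C) (hconv : Convex ℝ C) {x : E}
    (hx : x ∈ frontier C) : ∃ n, IsOuterUnitNormal C x n := by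
  have hxC : x ∈ C := hC.frontier_subset hx
  have hx_compl : x ∈ closure Cᶜ := frontier_subset_closure (by rwa [frontier_compl])
  obtain ⟨y, hyC, hyx⟩ := mem_closure_iff_seq_limit.1 hx_compl
  let p := nearestPoint C
  have hp : Continuous p := (lipschitzWith_nearestPoint ⟨x, hxC⟩ hC.isComplete hconv).continuous
  have sub_proj_ne_zero : ∀ k, y k - p (y k) ≠ 0 := fun k h =>
    hyC k (sub_eq_zero.1 h ▸ nearestPoint_mem ⟨x, hxC⟩ hC.isComplete hconv (y k))
  let n : ℕ → E := fun k => ‖y k - p (y k)‖⁻¹ • (y k - p (y k))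
  have hn : ∀ k, IsOuterUnitNormal C (p (y k)) (n k) := fun k =>
    isOuterUnitNormal_inv_norm_smul (sub_proj_ne_zero k) fun u hu =>
      inner_sub_nearestPoint_nonpos hC.isComplete hconv (y k) hu
  obtain ⟨m, -, φ, hφ, hm⟩ := (isCompact_sphere (0 : E) 1).tendsto_subseq fun k =>
    mem_sphere_zero_iff_norm.2 (hn k).1
  have hp_lim : Filter.Tendsto (fun k => p (y (φ k))) Filter.atTop (nhds x) := by
    have hcomp := (hp.tendsto x).comp (hyx.comp hφ.tendsto_atTop)
    rwa [show p x = x from nearestPoint_eq_self hC.isComplete hconv hxC] at hcomp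
  exact ⟨m, isOuterUnitNormal_of_tendsto hp_lim hm fun k => hn (φ k)⟩

theorem exists_outerNormalField_apply_eq (hC : IsClosed C) (hconv : Convex ℝ C) {z n : E}
    (hn : IsOuterUnitNormal C z n) :
    ∃ ν : E → E, (∀ x ∈ frontier C, IsOuterUnitNormal C x (ν x)) ∧ ν z = n := by
  classical
  choose! ν hν using fun x => exists_isOuterUnitNormal hC hconv (x := x)
  refine ⟨Function.update ν z n, fun x hx => ?_, Function.update_self ..⟩
  rcases eq_or_ne x z with rfl | hxz
  · rwa [Function.update_self]
  · rw [Function.update_of_ne hxz]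
    exact hν x hx

theorem zero_of_field_convex_all_outer_normal_fields_general (hne : C.Nonempty) (hC : IsCompact C)
    (hconv : Convex ℝ C) {f : E → E} (hf : ContinuousOn f C)
    (hnormal : ∀ ν : E → E, (∀ x ∈ frontier C, IsOuterUnitNormal C x (ν x)) →
      ∀ x ∈ frontier C, ⟪f x, ν x⟫ ≤ 0) :
    ∃ z ∈ C, f z = 0 := by
  obtain ⟨z, hzC, hz⟩ := exists_forall_inner_sub_nonpos_of_isCompact_of_convex hne hC hconv hf
  refine ⟨z, hzC, ?_⟩
  by_contra hfz
  have hz_frontier : z ∈ frontier C := ⟨subset_closure hzC, fun hz_int =>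
    hfz (eq_zero_of_mem_interior_of_forall_inner_nonpos hz_int hz)⟩
  obtain ⟨ν, hν, hνz⟩ := exists_outerNormalField_apply_eq hC.isClosed hconv
    (isOuterUnitNormal_inv_norm_smul hfz hz)
  have inner_nonpos : ⟪f z, ‖f z‖⁻¹ • f z⟫ ≤ 0 := hνz ▸ hnormal ν hν z hz_frontier
  rw [inner_smul_right, real_inner_self_eq_norm_mul_norm,
    inv_mul_cancel_left₀ (norm_ne_zero_iff.2 hfz)] at inner_nonpos
  exact hfz (norm_le_zero_iff.1 inner_nonpos)

end OuterNormal

/-- Cid–Mawhin. If `C ⊆ ℝ^N` is nonempty, closed, bounded and convex,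
`f` is continuous, and for every outer normal field `ν : ∂C → S^{N-1}` one has
`⟪f x, ν x⟫ ≤ 0` on `∂C`, then `f` has a zero in `C`. -/
theorem zero_of_field_convex_all_outer_normal_fields
    {N : ℕ} (C : Set (EuclideanSpace ℝ (Fin N)))
    (hne : C.Nonempty) (hclosed : IsClosed C)
    (hbdd : Bornology.IsBounded C) (hconv : Convex ℝ C)
    (f : EuclideanSpace ℝ (Fin N) → EuclideanSpace ℝ (Fin N))
    (hf : Continuous f)
    (hnormal : ∀ ν : EuclideanSpace ℝ (Fin N) → EuclideanSpace ℝ (Fin N),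
      (∀ x ∈ frontier C, ‖ν x‖ = 1 ∧ ∀ u ∈ C, ⟪u - x, ν x⟫ ≤ 0) →
      ∀ x ∈ frontier C, ⟪f x, ν x⟫ ≤ 0) :
    ∃ z ∈ C, f z = 0 :=
  zero_of_field_convex_all_outer_normal_fields_general hne
    (isCompact_of_isClosed_isBounded hclosed hbdd) hconv hf.continuousOn hnormal
end

section
/- Let C ⊂ ℝ^N be a nonempty, closed, bounded and convex set with nonempty interior, and let f : ℝ^N → ℝ^N be continuous. Suppose that there exists an outer normal field ν : ∂C → S^{N−1} such that ⟨f(x), ν(x)⟩ ≤ 0 for all x ∈ ∂C. Then C is weakly flow-invariant for the system ẏ = f(y): for each x₀ ∈ C there exist ε > 0 and a differentiable function y : [0, ε] → ℝ^N with y(0) = x₀, y'(t) = f(y(t)) for all t ∈ [0, ε], and y(t) ∈ C for all t ∈ [0, ε]. -/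
open Set Metric
open scoped RealInnerProductSpace

/-!
An Euler step `p = x + h • f x` from `x ∈ C` that leaves `C` is pulled back towards an interior
point `z` to the point `b` where it crosses `∂C`. Then `p - b = s • (b - z)`, and pairing with
`ν b` gives `s * r ≤ ⟪p - b, ν b⟫ ≤ h * ‖f x - f b‖`, where `r` is the radius of a ball around `z`
contained in `C`: the terms `⟪x - b, ν b⟫` and `⟪f b, ν b⟫` are nonpositive. As `f` is bounded on
`C`, this first shows `b - x = O(h)`; uniform continuity of `f` then makes the correction `‖p - b‖`
an `o(h)`, uniformly in `x`. The corrected Euler sequences stay in `C`, and as the step tends to `0`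
they converge along an ultrafilter to a solution.
-/

open Bornology Filter Topology

section Frontier

theorem inter_frontier_nonempty_of_isPreconnected {X : Type*} [TopologicalSpace X] {s t : Set X}
    (hs : IsPreconnected s) (hst : (s ∩ t).Nonempty) (hst' : (s ∩ tᶜ).Nonempty) :
    (s ∩ frontier t).Nonempty := by
  by_contra h
  have hcover : s ⊆ interior t ∪ (closure t)ᶜ := fun x hx ↦
    (em (x ∈ interior t)).imp_right fun hxi hxc ↦ h ⟨x, hx, hxc, hxi⟩
  obtain ⟨x, hxs, hxt⟩ := hst
  obtain ⟨w, hws, hwt⟩ := hst'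
  rcases hs.subset_or_subset isOpen_interior isClosed_closure.isOpen_compl
    (disjoint_compl_right_iff_subset.2 interior_subset_closure) hcover with hs | hs
  · exact hwt (interior_subset (hs hws))
  · exact hs hxs (subset_closure hxt)

theorem exists_mem_frontier_sub_eq_smul_sub {E : Type*} [AddCommGroup E] [Module ℝ E]
    [TopologicalSpace E] [ContinuousAdd E] [ContinuousSMul ℝ E] {C : Set E} {z p : E}
    (hz : z ∈ interior C) (hp : p ∉ C) :
    ∃ b ∈ frontier C, ∃ s : ℝ, 0 ≤ s ∧ p - b = s • (b - z) := by
  obtain ⟨b, ⟨a, t, ha, ht, hat, rfl⟩, hb⟩ := inter_frontier_nonempty_of_isPreconnected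
    (convex_segment (𝕜 := ℝ) z p).isPreconnected
    ⟨z, left_mem_segment ℝ z p, interior_subset hz⟩ ⟨p, right_mem_segment ℝ z p, hp⟩
  obtain rfl : a = 1 - t := by linarith
  have ht0 : t ≠ 0 := by
    rintro rfl
    exact hb.2 (by simpa using hz)
  refine ⟨_, hb, (1 - t) / t, div_nonneg ha ht, ?_⟩
  match_scalars
  · field_simp
  · field_simp
    ring

end Frontier

section Tangency

/-- Nagumo's tangency condition, uniformly over `C`: the quotients `dist (x + h • f x, C) / h`
tend to `0` as `h → 0⁺`, uniformly in `x ∈ C`. -/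
def IsUniformlySubtangent {E : Type*} [NormedAddCommGroup E] [NormedSpace ℝ E] (f : E → E)
    (C : Set E) : Prop :=
  ∀ η > 0, ∀ᶠ h : ℝ in 𝓝[>] 0, ∀ x ∈ C, ∃ x' ∈ C, ‖x' - (x + h • f x)‖ ≤ h * η

variable {E : Type*} [NormedAddCommGroup E] [InnerProductSpace ℝ E] {C : Set E} {f ν : E → E}
  {x z : E} {h r R : ℝ}

/-- An outer normal field of `C`: a choice of one unit outer normal at each boundary point.
Only the values on `frontier C` matter. -/
def IsOuterNormalField (C : Set E) (ν : E → E) : Prop :=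
  ∀ x ∈ frontier C, ‖ν x‖ = 1 ∧ ∀ u ∈ C, ⟪u - x, ν x⟫ ≤ 0

namespace IsOuterNormalField

theorem le_inner_sub (hν : IsOuterNormalField C ν) (hr : 0 ≤ r) (hball : closedBall z r ⊆ C)
    (hx : x ∈ frontier C) : r ≤ ⟪x - z, ν x⟫ := by
  obtain ⟨hnorm, hle⟩ := hν x hx
  have hmem : z + r • ν x ∈ C := hball <| by simp [norm_smul, hnorm, abs_of_nonneg hr]
  have hinner : ⟪z + r • ν x - x, ν x⟫ = r - ⟪x - z, ν x⟫ := by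
    rw [show z + r • ν x - x = r • ν x - (x - z) by abel, inner_sub_left, real_inner_smul_left,
      real_inner_self_eq_norm_sq, hnorm, one_pow, mul_one]
  linarith [hle _ hmem]

theorem exists_mem_norm_sub_le (hν : IsOuterNormalField C ν) (hC : IsClosed C)
    (hfν : ∀ x ∈ frontier C, ⟪f x, ν x⟫ ≤ 0) (hr : 0 < r) (hball : closedBall z r ⊆ C)
    (hR : C ⊆ closedBall z R) (hx : x ∈ C) (hh : 0 ≤ h) :
    ∃ b ∈ C, ‖b - (x + h • f x)‖ ≤ R / r * (h * ‖f x - f b‖) := by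
  have hR0 : 0 ≤ R := dist_nonneg.trans (hR hx)
  by_cases hp : x + h • f x ∈ C
  · refine ⟨_, hp, ?_⟩
    rw [sub_self, norm_zero]
    positivity
  have hz : z ∈ interior C := mem_interior.2
    ⟨ball z r, ball_subset_closedBall.trans hball, isOpen_ball, mem_ball_self hr⟩
  obtain ⟨b, hb, s, hs, hbs⟩ := exists_mem_frontier_sub_eq_smul_sub hz hp
  have hbC : b ∈ C := hC.frontier_subset hb
  have hbR : ‖b - z‖ ≤ R := mem_closedBall_iff_norm.1 (hR hbC)
  obtain ⟨hnorm, hle⟩ := hν b hb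
  have hsr : s * r ≤ h * ‖f x - f b‖ := calc
    s * r ≤ s * ⟪b - z, ν b⟫ := by gcongr; exact hν.le_inner_sub hr.le hball hb
    _ = ⟪x - b, ν b⟫ + h * ⟪f b, ν b⟫ + h * ⟪f x - f b, ν b⟫ := by
      rw [← real_inner_smul_left, ← hbs]
      simp only [← real_inner_smul_left, ← inner_add_left]
      congr 1; module
    _ ≤ 0 + h * 0 + h * (‖f x - f b‖ * ‖ν b‖) := by
      gcongr
      exacts [hle x hx, hfν b hb, real_inner_le_norm _ _]
    _ = h * ‖f x - f b‖ := by rw [hnorm]; ring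
  refine ⟨b, hbC, ?_⟩
  calc ‖b - (x + h • f x)‖ = s * ‖b - z‖ := by
        rw [norm_sub_rev, hbs, norm_smul, Real.norm_of_nonneg hs]
    _ ≤ s * R := by gcongr
    _ = R / r * (s * r) := by field_simp
    _ ≤ R / r * (h * ‖f x - f b‖) := by gcongr

theorem isUniformlySubtangent (hν : IsOuterNormalField C ν) (hC : IsClosed C)
    (hbdd : IsBounded C) (hint : (interior C).Nonempty) (hf : UniformContinuousOn f C)
    (hfbdd : IsBounded (f '' C)) (hfν : ∀ x ∈ frontier C, ⟪f x, ν x⟫ ≤ 0) :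
    IsUniformlySubtangent f C := by
  intro η hη
  obtain ⟨z, hz⟩ := hint
  obtain ⟨r, hr, hball⟩ := nhds_basis_closedBall.mem_iff.1 (mem_interior_iff_mem_nhds.1 hz)
  obtain ⟨R, hR0, hR⟩ := hbdd.subset_closedBall_lt 0 z
  obtain ⟨K, hK⟩ := hfbdd.exists_norm_le
  rw [forall_mem_image] at hK
  obtain ⟨δ, hδ, hfδ⟩ := uniformContinuousOn_iff.1 hf (r / R * η) (by positivity)
  have hsmall : ∀ᶠ h : ℝ in 𝓝[>] 0, h * (R / r * (K + K) + K) < δ := by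
    have : Tendsto (fun h : ℝ ↦ h * (R / r * (K + K) + K)) (𝓝 0) (𝓝 0) :=
      Continuous.tendsto' (by fun_prop) _ _ (zero_mul _)
    exact (this.mono_left nhdsWithin_le_nhds).eventually_lt_const hδ
  filter_upwards [hsmall, self_mem_nhdsWithin] with h hhδ (hh : 0 < h) x hx
  obtain ⟨b, hbC, hb⟩ := hν.exists_mem_norm_sub_le hC hfν hr hball hR hx hh.le
  have hbx : dist x b < δ := calc
    dist x b = ‖(b - (x + h • f x)) + h • f x‖ := by rw [dist_comm, dist_eq_norm]; congr 1; abel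
    _ ≤ R / r * (h * (K + K)) + h * K := by
      refine (norm_add_le _ _).trans (add_le_add (hb.trans ?_) ?_)
      · gcongr
        exact norm_sub_le_of_le (hK hx) (hK hbC)
      · rw [norm_smul, Real.norm_of_nonneg hh.le]
        gcongr
        exact hK hx
    _ = h * (R / r * (K + K) + K) := by ring
    _ < δ := hhδ
  refine ⟨b, hbC, hb.trans ?_⟩
  calc R / r * (h * ‖f x - f b‖) ≤ R / r * (h * (r / R * η)) := by
        gcongr
        rw [← dist_eq_norm]
        exact (hfδ x hx b hbC hbx).le
    _ = h * η := by field_simp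

end IsOuterNormalField

end Tangency

section Euler

variable {E : Type*} [NormedAddCommGroup E] [NormedSpace ℝ E] {f : E → E} {C : Set E}

/-- A sequence in `C` produced by the Euler method for `ẏ = f y` with step `h`, where each step may
be corrected by at most `h * η`. -/
structure IsApproxEulerSeq (f : E → E) (C : Set E) (h η : ℝ) (x : ℕ → E) : Prop where
  mem : ∀ k, x k ∈ C
  norm_step_le : ∀ k, ‖x (k + 1) - (x k + h • f (x k))‖ ≤ h * η

theorem IsUniformlySubtangent.exists_isApproxEulerSeq (hf : IsUniformlySubtangent f C) {x₀ : E}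
    (hx₀ : x₀ ∈ C) {η : ℝ} (hη : 0 < η) :
    ∃ h ∈ Ioo 0 η, ∃ x, x 0 = x₀ ∧ IsApproxEulerSeq f C h η x := by
  obtain ⟨h, hstep, hh⟩ := ((hf η hη).and (Ioo_mem_nhdsGT hη)).exists
  choose! φ hφC hφ using hstep
  have hmem (k : ℕ) : φ^[k] x₀ ∈ C := Set.MapsTo.iterate hφC k hx₀
  refine ⟨h, hh, fun k ↦ φ^[k] x₀, rfl, hmem, fun k ↦ ?_⟩
  rw [Function.iterate_succ_apply']
  exact hφ _ (hmem k)

namespace IsApproxEulerSeq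

variable {x : ℕ → E} {w : E} {h η K δ ε : ℝ} {i j k m : ℕ}

theorem norm_sub_sub_smul_le (hx : IsApproxEulerSeq f C h η x) (hh : 0 ≤ h) (hkm : k ≤ m)
    (hw : ∀ j ∈ Ico k m, ‖f (x j) - w‖ ≤ ε) :
    ‖x m - x k - (m * h - k * h) • w‖ ≤ (m * h - k * h) * (ε + η) := by
  have hstep {j : ℕ} (hkj : k ≤ j) (hjm : j < m) :
      dist (x j - (j * h) • w) (x (j + 1) - ((j + 1 : ℕ) * h) • w) ≤ h * (ε + η) := calc
    _ = ‖h • (f (x j) - w) + (x (j + 1) - (x j + h • f (x j)))‖ := by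
      rw [dist_comm, dist_eq_norm]
      congr 1; push_cast; module
    _ ≤ h * ε + h * η := by
      refine norm_add_le_of_le ?_ (hx.norm_step_le j)
      rw [norm_smul, Real.norm_of_nonneg hh]
      gcongr
      exact hw j ⟨hkj, hjm⟩
    _ = h * (ε + η) := by ring
  calc ‖x m - x k - (m * h - k * h) • w‖ = dist (x k - (k * h) • w) (x m - (m * h) • w) := by
        rw [dist_comm, dist_eq_norm]
        congr 1; module
    _ ≤ ∑ _j ∈ Finset.Ico k m, h * (ε + η) := dist_le_Ico_sum_of_dist_le hkm hstep
    _ = (m * h - k * h) * (ε + η) := by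
      rw [Finset.sum_const, Nat.card_Ico, nsmul_eq_mul, Nat.cast_sub hkm]
      ring

theorem dist_le (hx : IsApproxEulerSeq f C h η x) (hh : 0 ≤ h) (hη : 0 ≤ η)
    (hK : ∀ x ∈ C, ‖f x‖ ≤ K) (hi : i ∈ Icc k m) (hj : j ∈ Icc k m) :
    dist (x i) (x j) ≤ (m * h - k * h) * (K + η) := by
  wlog hij : i ≤ j generalizing i j
  · rw [dist_comm]
    exact this hj hi (le_of_not_ge hij)
  have hK0 : 0 ≤ K := (norm_nonneg _).trans (hK _ (hx.mem 0))
  calc dist (x i) (x j) = ‖x j - x i - (j * h - i * h) • (0 : E)‖ := by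
        rw [dist_comm, dist_eq_norm, smul_zero, sub_zero]
    _ ≤ (j * h - i * h) * (K + η) :=
      hx.norm_sub_sub_smul_le hh hij fun l _ ↦ by simpa using hK _ (hx.mem l)
    _ ≤ (m * h - k * h) * (K + η) := by gcongr; exacts [hj.2, hi.1]

theorem norm_sub_sub_smul_apply_le (hx : IsApproxEulerSeq f C h η x) (hh : 0 ≤ h) (hη : 0 ≤ η)
    (hK : ∀ x ∈ C, ‖f x‖ ≤ K) (hf : ∀ u ∈ C, ∀ v ∈ C, dist u v < δ → dist (f u) (f v) < ε)
    (hkm : k ≤ m) (hδ : (m * h - k * h) * (K + η) < δ) (hi : i ∈ Icc k m) :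
    ‖x m - x k - (m * h - k * h) • f (x i)‖ ≤ (m * h - k * h) * (ε + η) :=
  hx.norm_sub_sub_smul_le hh hkm fun j hj ↦ by
    rw [← dist_eq_norm]
    exact (hf _ (hx.mem j) _ (hx.mem i)
      ((hx.dist_le hh hη hK (Ico_subset_Icc_self hj) hi).trans_lt hδ)).le

end IsApproxEulerSeq

theorem tendsto_natFloor_div_mul {ι : Type*} {l : Filter ι} {h : ι → ℝ}
    (hh : Tendsto h l (𝓝[>] 0)) {t : ℝ} (ht : 0 ≤ t) :
    Tendsto (fun n ↦ ⌊t / h n⌋₊ * h n) l (𝓝 t) := by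
  simpa only [Function.comp_def, ← div_eq_mul_inv, div_inv_eq_mul] using
    (tendsto_nat_floor_mul_div_atTop ht).comp (tendsto_inv_nhdsGT_zero.comp hh)

theorem norm_sub_sub_smul_le_of_tendsto_isApproxEulerSeq {ι : Type*} {l : Filter ι} [l.NeBot]
    {h η : ι → ℝ} {X : ι → ℕ → E} {y : ℝ → E} {K δ ε s t τ : ℝ}
    (hX : ∀ n, IsApproxEulerSeq f C (h n) (η n) (X n)) (hh : Tendsto h l (𝓝[>] 0))
    (hη : Tendsto η l (𝓝[>] 0)) (hy : ∀ t, Tendsto (fun n ↦ X n ⌊t / h n⌋₊) l (𝓝 (y t)))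
    (hfc : ContinuousOn f C) (hyC : ∀ t, y t ∈ C) (hK : ∀ x ∈ C, ‖f x‖ ≤ K)
    (hf : ∀ u ∈ C, ∀ v ∈ C, dist u v < δ → dist (f u) (f v) < ε)
    (hs : 0 ≤ s) (hτ : τ ∈ Icc s t) (hδ : (t - s) * K < δ) :
    ‖y t - y s - (t - s) • f (y τ)‖ ≤ (t - s) * ε := by
  have hst : s ≤ t := hτ.1.trans hτ.2
  have hη0 : Tendsto η l (𝓝 0) := hη.mono_right nhdsWithin_le_nhds
  have helapsed : Tendsto (fun n ↦ ⌊t / h n⌋₊ * h n - ⌊s / h n⌋₊ * h n) l (𝓝 (t - s)) :=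
    (tendsto_natFloor_div_mul hh (hs.trans hst)).sub (tendsto_natFloor_div_mul hh hs)
  have hfy : Tendsto (fun n ↦ f (X n ⌊τ / h n⌋₊)) l (𝓝 (f (y τ))) :=
    (hfc _ (hyC τ)).tendsto.comp <|
      tendsto_nhdsWithin_iff.2 ⟨hy τ, .of_forall fun n ↦ (hX n).mem _⟩
  have hδ' := (helapsed.mul (hη0.const_add K)).eventually_lt_const (by rwa [add_zero])
  have hlim := helapsed.mul (hη0.const_add ε)
  rw [add_zero] at hlim
  refine le_of_tendsto_of_tendsto (((hy t).sub (hy s)).sub (helapsed.smul hfy)).norm hlim ?_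
  filter_upwards [hδ', (tendsto_nhdsWithin_iff.1 hh).2, (tendsto_nhdsWithin_iff.1 hη).2]
    with n hn (hhn : 0 < h n) (hηn : 0 < η n)
  exact (hX n).norm_sub_sub_smul_apply_le hhn.le hηn.le hK hf (by gcongr) hn
    ⟨by gcongr; exact hτ.1, by gcongr; exact hτ.2⟩

theorem hasDerivWithinAt_Ici_of_norm_sub_sub_smul_le {y v : ℝ → E} {a : ℝ}
    (hy : ∀ ε > 0, ∃ δ > 0, ∀ s t, a ≤ s → t - s < δ → ∀ τ ∈ Icc s t,
      ‖y t - y s - (t - s) • v τ‖ ≤ (t - s) * ε) :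
    ∀ t ∈ Ici a, HasDerivWithinAt y (v t) (Ici a) t := by
  intro t ht
  rw [hasDerivWithinAt_iff_isLittleO, Asymptotics.isLittleO_iff]
  intro ε hε
  obtain ⟨δ, hδ, hyδ⟩ := hy ε hε
  filter_upwards [nhdsWithin_le_nhds (ball_mem_nhds t hδ), self_mem_nhdsWithin]
    with s hs (has : a ≤ s)
  rw [mem_ball, Real.dist_eq, abs_lt] at hs
  rcases le_total t s with hts | hst
  · rw [Real.norm_of_nonneg (sub_nonneg.2 hts), mul_comm]
    exact hyδ t s ht hs.2 t (left_mem_Icc.2 hts)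
  · calc ‖y s - y t - (s - t) • v t‖ = ‖y t - y s - (t - s) • v t‖ := by
          rw [← norm_neg]; congr 1; module
      _ ≤ (t - s) * ε := hyδ s t has (by linarith) t (right_mem_Icc.2 hst)
      _ = ε * ‖s - t‖ := by rw [norm_sub_rev, Real.norm_of_nonneg (sub_nonneg.2 hst), mul_comm]

theorem IsUniformlySubtangent.exists_solution (hf : IsUniformlySubtangent f C) (hC : IsCompact C)
    (hfc : ContinuousOn f C) {x₀ : E} (hx₀ : x₀ ∈ C) :
    ∃ y : ℝ → E, y 0 = x₀ ∧ (∀ t ∈ Ici (0 : ℝ), HasDerivWithinAt y (f (y t)) (Ici 0) t) ∧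
      ∀ t ∈ Ici (0 : ℝ), y t ∈ C := by
  let η (n : ℕ) : ℝ := 1 / (n + 1)
  have hη0 (n : ℕ) : 0 < η n := Nat.one_div_pos_of_nat
  choose h hh X hX0 hX using fun n ↦ hf.exists_isApproxEulerSeq hx₀ (hη0 n)
  have hη : Tendsto η (hyperfilter ℕ) (𝓝 0) :=
    tendsto_one_div_add_atTop_nhds_zero_nat.mono_left Nat.hyperfilter_le_atTop
  have hhlim : Tendsto h (hyperfilter ℕ) (𝓝 0) :=
    squeeze_zero (fun n ↦ (hh n).1.le) (fun n ↦ (hh n).2.le) hη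
  -- An ultrafilter makes all pointwise limits exist at once, without any equicontinuity argument.
  have hlim (t : ℝ) : ∃ v ∈ C, Tendsto (fun n ↦ X n ⌊t / h n⌋₊) (hyperfilter ℕ) (𝓝 v) :=
    hC.ultrafilter_le_nhds' ((hyperfilter ℕ).map fun n ↦ X n ⌊t / h n⌋₊)
      (Ultrafilter.mem_map.2 (univ_mem' fun n ↦ (hX n).mem _))
  choose y hyC hy using hlim
  obtain ⟨K, hK⟩ := hC.exists_bound_of_continuousOn hfc
  have hK0 : 0 ≤ K := (norm_nonneg _).trans (hK x₀ hx₀)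
  refine ⟨y, tendsto_nhds_unique (hy 0) (by simp [hX0]),
    hasDerivWithinAt_Ici_of_norm_sub_sub_smul_le fun ε hε ↦ ?_, fun t _ ↦ hyC t⟩
  obtain ⟨δ, hδ, hfδ⟩ :=
    uniformContinuousOn_iff.1 (hC.uniformContinuousOn_of_continuous hfc) ε hε
  refine ⟨δ / (K + 1), by positivity, fun s t hs hst τ hτ ↦ ?_⟩
  have hsmall : (t - s) * K < δ := calc
    (t - s) * K ≤ (t - s) * (K + 1) := by
      have : 0 ≤ t - s := sub_nonneg.2 (hτ.1.trans hτ.2)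
      gcongr
      exact (lt_add_one K).le
    _ < δ := (lt_div_iff₀ (by positivity)).1 hst
  exact norm_sub_sub_smul_le_of_tendsto_isApproxEulerSeq hX
    (tendsto_nhdsWithin_iff.2 ⟨hhlim, .of_forall fun n ↦ (hh n).1⟩)
    (tendsto_nhdsWithin_iff.2 ⟨hη, .of_forall hη0⟩) hy hfc hyC hK hfδ hs hτ hsmall

end Euler

theorem weak_flow_invariance_convex_some_outer_normal_field_general {E : Type*}
    [NormedAddCommGroup E] [InnerProductSpace ℝ E] {C : Set E} (hC : IsCompact C)
    (hint : (interior C).Nonempty) {f ν : E → E} (hf : ContinuousOn f C)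
    (hν : IsOuterNormalField C ν) (hfν : ∀ x ∈ frontier C, ⟪f x, ν x⟫ ≤ 0) {x₀ : E}
    (hx₀ : x₀ ∈ C) :
    ∃ y : ℝ → E, y 0 = x₀ ∧ (∀ t ∈ Ici (0 : ℝ), HasDerivWithinAt y (f (y t)) (Ici 0) t) ∧
      ∀ t ∈ Ici (0 : ℝ), y t ∈ C :=
  (hν.isUniformlySubtangent hC.isClosed hC.isBounded hint
    (hC.uniformContinuousOn_of_continuous hf) (hC.image_of_continuousOn hf).isBounded
    hfν).exists_solution hC hf hx₀

/-- If `C ⊆ ℝ^N` is nonempty, closed, bounded, convex with nonempty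
interior, `f` is continuous, and there exists an outer normal field `ν` with
`⟪f x, ν x⟫ ≤ 0` on `∂C`, then `C` is weakly flow-invariant for `ẏ = f(y)`. -/
theorem weak_flow_invariance_convex_some_outer_normal_field
    {N : ℕ} (C : Set (EuclideanSpace ℝ (Fin N)))
    (hne : C.Nonempty) (hclosed : IsClosed C)
    (hbdd : Bornology.IsBounded C) (hconv : Convex ℝ C)
    (hint : (interior C).Nonempty)
    (f : EuclideanSpace ℝ (Fin N) → EuclideanSpace ℝ (Fin N))
    (hf : Continuous f)
    (hnormal : ∃ ν : EuclideanSpace ℝ (Fin N) → EuclideanSpace ℝ (Fin N),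
      (∀ x ∈ frontier C, ‖ν x‖ = 1 ∧ ∀ u ∈ C, ⟪u - x, ν x⟫ ≤ 0) ∧
      ∀ x ∈ frontier C, ⟪f x, ν x⟫ ≤ 0) :
    ∀ x₀ ∈ C, ∃ ε > (0 : ℝ), ∃ y : ℝ → EuclideanSpace ℝ (Fin N),
      y 0 = x₀ ∧
      (∀ t ∈ Icc (0 : ℝ) ε, HasDerivWithinAt y (f (y t)) (Icc (0 : ℝ) ε) t) ∧
      (∀ t ∈ Icc (0 : ℝ) ε, y t ∈ C) := by
  intro x₀ hx₀
  obtain ⟨ν, hν, hfν⟩ := hnormal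
  obtain ⟨y, hy0, hy, hyC⟩ := weak_flow_invariance_convex_some_outer_normal_field_general
    (isCompact_of_isClosed_isBounded hclosed hbdd) hint hf.continuousOn hν hfν hx₀
  exact ⟨1, one_pos, y, hy0, fun t ht ↦ (hy t ht.1).mono Icc_subset_Ici_self,
    fun t ht ↦ hyC t ht.1⟩
end

section
/- Let Ω ⊆ ℝ^N be a nonempty open set, f : Ω → ℝ^N continuous, and G an open bounded set with closure cl(G) ⊆ Ω. Suppose there exist a sequence of positive reals (T_k) with T_k → 0⁺ and a sequence of differentiable functions ζ_k : ℝ → ℝ^N such that for each k: ζ_k'(t) = f(ζ_k(t)) for all t ∈ ℝ, ζ_k(t + T_k) = ζ_k(t) for all t ∈ ℝ, and ζ_k(t) ∈ cl(G) for all t ∈ ℝ. Then there exists z* ∈ cl(G) with f(z*) = 0. -/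
open Set Metric

/-!
Over a period the average velocity of a periodic solution is zero, so every single velocity
`f (ζ t)` is bounded by the oscillation of `f` along the orbit. On a compact set `K` containing the
orbits, `f` is bounded, so an orbit of period `T` has diameter `O(T)`, and `f` is uniformly
continuous, so its oscillation along the orbit tends to zero with `T`. Hence `0` is a limit of
values of `f` on `K`, and belongs to the compact image of `K`.
-/

section ShortClosedIntegralCurves

open Filter Topology

variable {E : Type*} [NormedAddCommGroup E] [NormedSpace ℝ E] {f : E → E} {K : Set E}

lemma norm_le_of_norm_deriv_sub_le_of_eq_endpoints {γ γ' : ℝ → E} {a b ε : ℝ} {v : E} (hab : a < b)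
    (hγ : ∀ t ∈ Icc a b, HasDerivWithinAt γ (γ' t) (Icc a b) t)
    (hv : ∀ t ∈ Ico a b, ‖γ' t - v‖ ≤ ε) (hclosed : γ a = γ b) : ‖v‖ ≤ ε := by
  have hdrift : ∀ t ∈ Icc a b,
      HasDerivWithinAt (fun s ↦ γ s - s • v) (γ' t - v) (Icc a b) t := fun t ht ↦ by
    simpa only [id, one_smul] using (hγ t ht).fun_sub ((hasDerivWithinAt_id t _).smul_const v)
  have hmean : (b - a) * ‖v‖ ≤ (b - a) * ε := calc
    (b - a) * ‖v‖ = ‖(b - a) • v‖ := (norm_smul_of_nonneg (sub_pos.2 hab).le v).symm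
    _ = ‖(γ b - b • v) - (γ a - a • v)‖ := by
      rw [hclosed, sub_sub_sub_cancel_left, ← sub_smul, ← norm_neg, ← neg_smul, neg_sub]
    _ ≤ ε * (b - a) :=
      norm_image_sub_le_of_norm_deriv_le_segment' hdrift hv b (right_mem_Icc.2 hab.le)
    _ = (b - a) * ε := mul_comm _ _
  exact le_of_mul_le_mul_left hmean (sub_pos.2 hab)

lemma norm_field_le_of_short_closed_integralCurve {γ : ℝ → E} {a b M δ ε : ℝ}
    (hγ : IsIntegralCurveOn γ (fun _ ↦ f) (Icc a b)) (hK : MapsTo γ (Icc a b) K) (hab : a < b)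
    (hclosed : γ a = γ b) (hM : ∀ x ∈ K, ‖f x‖ ≤ M)
    (hosc : ∀ x ∈ K, ∀ y ∈ K, dist x y ≤ δ → dist (f x) (f y) ≤ ε) (hshort : M * (b - a) ≤ δ) :
    ‖f (γ a)‖ ≤ ε := by
  have ha : γ a ∈ K := hK (left_mem_Icc.2 hab.le)
  have hM₀ : 0 ≤ M := (norm_nonneg _).trans (hM _ ha)
  have hdist : ∀ t ∈ Icc a b, dist (γ t) (γ a) ≤ δ := fun t ht ↦ calc
    dist (γ t) (γ a) = ‖γ t - γ a‖ := dist_eq_norm _ _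
    _ ≤ M * (t - a) := norm_image_sub_le_of_norm_deriv_le_segment' hγ
      (fun s hs ↦ hM _ (hK (Ico_subset_Icc_self hs))) t ht
    _ ≤ M * (b - a) := by gcongr; exact ht.2
    _ ≤ δ := hshort
  refine norm_le_of_norm_deriv_sub_le_of_eq_endpoints hab hγ (fun t ht ↦ ?_) hclosed
  have ht' := Ico_subset_Icc_self ht
  exact (dist_eq_norm _ _).symm.trans_le (hosc _ (hK ht') _ ha (hdist t ht'))

variable {ι : Type*} {l : Filter ι} {T : ι → ℝ} {ζ : ι → ℝ → E}

lemma tendsto_field_zero_of_short_closed_integralCurves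
    (hf : UniformContinuousOn f K) (hbdd : Bornology.IsBounded (f '' K))
    (hTpos : ∀ k, 0 < T k) (hT0 : Tendsto T l (𝓝 0))
    (hsol : ∀ k, IsIntegralCurveOn (ζ k) (fun _ ↦ f) (Icc 0 (T k)))
    (hclosed : ∀ k, ζ k 0 = ζ k (T k)) (hin : ∀ k, MapsTo (ζ k) (Icc 0 (T k)) K) :
    Tendsto (fun k ↦ f (ζ k 0)) l (𝓝 0) := by
  obtain ⟨M, hM⟩ := hbdd.exists_norm_le
  rw [forall_mem_image] at hM
  refine nhds_basis_closedBall.tendsto_right_iff.2 fun ε hε ↦ ?_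
  obtain ⟨δ, hδ, hosc⟩ := Metric.uniformContinuousOn_iff_le.1 hf ε hε
  have hMT : Tendsto (fun k ↦ M * (T k - 0)) l (𝓝 0) := by simpa using hT0.const_mul M
  filter_upwards [hMT.eventually_le_const hδ] with k hk
  exact mem_closedBall_zero_iff.2 <|
    norm_field_le_of_short_closed_integralCurve (hsol k) (hin k) (hTpos k) (hclosed k)
      (fun _ hx ↦ hM hx) hosc hk

theorem zero_of_field_from_small_periodic_solutions_general [l.NeBot]
    (hK : IsCompact K) (hf : ContinuousOn f K)
    (hTpos : ∀ k, 0 < T k) (hT0 : Tendsto T l (𝓝 0))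
    (hsol : ∀ k, IsIntegralCurveOn (ζ k) (fun _ ↦ f) (Icc 0 (T k)))
    (hclosed : ∀ k, ζ k 0 = ζ k (T k)) (hin : ∀ k, MapsTo (ζ k) (Icc 0 (T k)) K) :
    ∃ z ∈ K, f z = 0 := by
  have hfK : IsCompact (f '' K) := hK.image_of_continuousOn hf
  have hlim : Tendsto (fun k ↦ f (ζ k 0)) l (𝓝 0) :=
    tendsto_field_zero_of_short_closed_integralCurves
      (hK.uniformContinuousOn_of_continuous hf) hfK.isBounded hTpos hT0 hsol hclosed hin
  exact hfK.isClosed.mem_of_tendsto hlim <|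
    .of_forall fun k ↦ mem_image_of_mem f (hin k (left_mem_Icc.2 (hTpos k).le))

end ShortClosedIntegralCurves

/-- If an autonomous system `ẏ = f(y)` admits `T_k`-periodic solutions
with values in `cl G`, with `T_k > 0` and `T_k → 0`, then `f` has a zero in `cl G`. -/
theorem zero_of_field_from_small_periodic_solutions
    {N : ℕ} (Ω : Set (EuclideanSpace ℝ (Fin N))) (hΩ : IsOpen Ω) (hΩne : Ω.Nonempty)
    (f : EuclideanSpace ℝ (Fin N) → EuclideanSpace ℝ (Fin N))
    (hf : ContinuousOn f Ω)
    (G : Set (EuclideanSpace ℝ (Fin N)))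
    (hG : IsOpen G) (hGb : Bornology.IsBounded G) (hGΩ : closure G ⊆ Ω)
    (T : ℕ → ℝ) (hTpos : ∀ k, 0 < T k)
    (hT0 : Filter.Tendsto T Filter.atTop (nhds 0))
    (ζ : ℕ → ℝ → EuclideanSpace ℝ (Fin N))
    (hsol : ∀ k, ∀ t : ℝ, HasDerivAt (ζ k) (f (ζ k t)) t)
    (hper : ∀ k, ∀ t : ℝ, ζ k (t + T k) = ζ k t)
    (hin : ∀ k, ∀ t : ℝ, ζ k t ∈ closure G) :
    ∃ z ∈ closure G, f z = 0 :=
  zero_of_field_from_small_periodic_solutions_general hGb.isCompact_closure (hf.mono hGΩ) hTpos hT0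
    (fun k ↦ IsIntegralCurve.isIntegralCurveOn (hsol k) _)
    (fun k ↦ by simpa using (hper k 0).symm) (fun k t _ ↦ hin k t)
end

section
/- Let Ω ⊆ ℝ^N be open, f : [0,T] × Ω → ℝ^N continuous, and G an open bounded set with cl(G) ⊆ Ω. Suppose there is a family (V_u)_{u∈∂G} of bounding functions for G such that for each u ∈ ∂G there exists ρ_u ∈ (0, r_u] with ⟨f(t,x), ∇V_u(x)⟩ ≤ 0 for all x ∈ G ∩ B(u, ρ_u) and all t ∈ [0,T]. Then G is strongly flow-invariant: for every τ ∈ (0,T] and every differentiable y : [0,τ] → Ω with y'(t) = f(t, y(t)) for all t ∈ [0,τ] and y(0) ∈ G, one has y(t) ∈ G for all t ∈ [0,τ]. -/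
open Set Metric
open scoped RealInnerProductSpace

/-!
A solution that leaves `G` has a first exit time `c > 0`, and `u = y c` lies on the boundary of `G`.
Just before `c` the solution is inside `G` and close to `u`, so there `V_u ∘ y` is negative with
nonpositive derivative, hence nonincreasing. But it tends to `V_u u = 0` as `t → c⁻`, which a
nonincreasing function with negative values cannot do.
-/

section

open Filter
open scoped Topology

theorem exists_first_exit {α X : Type*} [ConditionallyCompleteLinearOrder α] [DenselyOrdered α]
    [TopologicalSpace α] [OrderTopology α] [TopologicalSpace X] {y : α → X} {a b : α} {G : Set X}
    (hG : IsOpen G) (hy : ContinuousOn y (Icc a b)) (ha : y a ∈ G)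
    (hexit : ∃ t ∈ Icc a b, y t ∉ G) :
    ∃ c ∈ Ioc a b, y c ∈ frontier G ∧ MapsTo y (Ico a c) G := by
  have hcompact : IsCompact (Icc a b ∩ y ⁻¹' Gᶜ) :=
    isCompact_Icc.of_isClosed_subset
      (hy.preimage_isClosed_of_isClosed isClosed_Icc hG.isClosed_compl) inter_subset_left
  obtain ⟨c, ⟨hc, hcG⟩, hleast⟩ := hcompact.exists_isLeast hexit
  have hac : a < c := hc.1.lt_of_ne fun h => hcG (h ▸ ha)
  have hbefore : MapsTo y (Ico a c) G := fun t ht =>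
    by_contra fun htG => ht.2.not_ge (hleast ⟨⟨ht.1, ht.2.le.trans hc.2⟩, htG⟩)
  have hclosure : y c ∈ closure G := by
    refine ((hy c hc).mono fun t ht => ⟨ht.1, ht.2.le.trans hc.2⟩).mem_closure ?_ hbefore
    rw [closure_Ico hac.ne]
    exact right_mem_Icc.2 hac.le
  exact ⟨c, ⟨hac, hc.2⟩, hG.frontier_eq ▸ ⟨hclosure, hcG⟩, hbefore⟩

theorem eventually_le_of_tendsto_of_rightDeriv_nonpos {g g' : ℝ → ℝ} {c l : ℝ}
    (hcont : ∀ᶠ t in 𝓝[<] c, ContinuousAt g t)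
    (hderiv : ∀ᶠ t in 𝓝[<] c, HasDerivWithinAt g (g' t) (Ici t) t)
    (hnonpos : ∀ᶠ t in 𝓝[<] c, g' t ≤ 0) (hlim : Tendsto g (𝓝[<] c) (𝓝 l)) :
    ∀ᶠ t in 𝓝[<] c, l ≤ g t := by
  obtain ⟨a, hac, ha⟩ := mem_nhdsLT_iff_exists_Ioo_subset.1 (hcont.and (hderiv.and hnonpos))
  have hanti : ∀ s ∈ Ioo a c, ∀ t ∈ Ioo s c, g t ≤ g s := by
    intro s hs t ht
    have hsub : Icc s t ⊆ Ioo a c := Icc_subset_Ioo hs.1 ht.2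
    exact image_le_of_deriv_right_le_deriv_boundary (B := fun _ => g s) (B' := 0)
      (fun x hx => (ha (hsub hx)).1.continuousWithinAt)
      (fun x hx => (ha (hsub (Ico_subset_Icc_self hx))).2.1) le_rfl continuousOn_const
      (fun x _ => hasDerivWithinAt_const x _ _)
      (fun x hx => (ha (hsub (Ico_subset_Icc_self hx))).2.2) (right_mem_Icc.2 ht.1.le)
  filter_upwards [Ioo_mem_nhdsLT hac] with s hs
  exact le_of_tendsto hlim (mem_of_superset (Ioo_mem_nhdsLT hs.2) (hanti s hs))

variable {E : Type*} [NormedAddCommGroup E] [NormedSpace ℝ E] {G : Set E} {u : E} {V : E → ℝ}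

/-- `V` is a bounding function for `G` at the boundary point `u`: near `u` in `G` it is
differentiable and negative, and it vanishes at `u` in the limit along `G`. Unlike the classical
notion, this asks for no `C¹` regularity and nothing of `V` outside `G`; the ball `B(u, r_u)`
becomes the filter `𝓝[G] u`. -/
structure IsBoundingFunctionAt (V : E → ℝ) (G : Set E) (u : E) : Prop where
  differentiableAt : ∀ᶠ x in 𝓝[G] u, DifferentiableAt ℝ V x
  tendsto_zero : Tendsto V (𝓝[G] u) (𝓝 0)
  neg : ∀ᶠ x in 𝓝[G] u, V x < 0

namespace IsBoundingFunctionAt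

theorem of_differentiableOn {r : ℝ} (hr : 0 < r) (hV : DifferentiableOn ℝ V (ball u r))
    (hu : V u = 0) (hneg : ∀ x ∈ G ∩ ball u r, V x < 0) : IsBoundingFunctionAt V G u where
  differentiableAt := by
    filter_upwards [mem_nhdsWithin_of_mem_nhds (ball_mem_nhds u hr)] with x hx
    exact hV.differentiableAt (isOpen_ball.mem_nhds hx)
  tendsto_zero := by
    have hcont : ContinuousAt V u := hV.continuousOn.continuousAt (ball_mem_nhds u hr)
    exact hu ▸ hcont.tendsto.mono_left nhdsWithin_le_nhds
  neg := mem_of_superset (inter_mem_nhdsWithin G (ball_mem_nhds u hr)) hneg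

theorem not_tendsto_of_fderiv_nonpos (hV : IsBoundingFunctionAt V G u) {y y' : ℝ → E} {c : ℝ}
    (hyG : ∀ᶠ t in 𝓝[<] c, y t ∈ G) (hcont : ∀ᶠ t in 𝓝[<] c, ContinuousAt y t)
    (hderiv : ∀ᶠ t in 𝓝[<] c, HasDerivWithinAt y (y' t) (Ici t) t)
    (hnonpos : ∀ᶠ t in 𝓝[<] c, fderiv ℝ V (y t) (y' t) ≤ 0) :
    ¬Tendsto y (𝓝[<] c) (𝓝 u) := by
  intro hyu
  have hlim : Tendsto y (𝓝[<] c) (𝓝[G] u) := tendsto_nhdsWithin_iff.2 ⟨hyu, hyG⟩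
  have hdiff : ∀ᶠ t in 𝓝[<] c, DifferentiableAt ℝ V (y t) := hlim.eventually hV.differentiableAt
  have hnonneg : ∀ᶠ t in 𝓝[<] c, 0 ≤ V (y t) := by
    refine eventually_le_of_tendsto_of_rightDeriv_nonpos ?_ ?_ hnonpos (hV.tendsto_zero.comp hlim)
    · filter_upwards [hdiff, hcont] with t hVt hyt using hVt.continuousAt.comp hyt
    · filter_upwards [hdiff, hderiv] with t hVt hyt
      exact hVt.hasFDerivAt.comp_hasDerivWithinAt t hyt
  obtain ⟨t, ht_nonneg, ht_neg⟩ := (hnonneg.and (hlim.eventually hV.neg)).exists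
  exact ht_nonneg.not_gt ht_neg

end IsBoundingFunctionAt

theorem eventually_fderiv_nonpos_of_inner_gradient_nonpos {ι F : Type*} [NormedAddCommGroup F]
    [InnerProductSpace ℝ F] [CompleteSpace F] {G : Set F} {u : F} {V : F → ℝ} {f : ι → F → F}
    {S : Set ι} {ρ : ℝ} (hρ : 0 < ρ)
    (hinner : ∀ t ∈ S, ∀ x ∈ G ∩ ball u ρ, ⟪f t x, gradient V x⟫ ≤ 0) :
    ∀ᶠ x in 𝓝[G] u, ∀ t ∈ S, fderiv ℝ V x (f t x) ≤ 0 := by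
  filter_upwards [inter_mem_nhdsWithin G (ball_mem_nhds u hρ)] with x hx t ht
  simpa only [inner_gradient_right, conj_trivial] using hinner t ht x hx

theorem strong_flow_invariance_of_bounding_functions_general {a b : ℝ} {f : ℝ → E → E}
    {V : E → E → ℝ} (hG : IsOpen G) (hV : ∀ u ∈ frontier G, IsBoundingFunctionAt (V u) G u)
    (hsub : ∀ u ∈ frontier G, ∀ᶠ x in 𝓝[G] u, ∀ t ∈ Ioo a b, fderiv ℝ (V u) x (f t x) ≤ 0)
    {y : ℝ → E} (hcont : ContinuousOn y (Icc a b))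
    (hderiv : ∀ t ∈ Ioo a b, HasDerivWithinAt y (f t (y t)) (Ici t) t) (ha : y a ∈ G) :
    ∀ t ∈ Icc a b, y t ∈ G := by
  by_contra! hexit
  obtain ⟨c, hc, hfrontier, hbefore⟩ := exists_first_exit hG hcont ha hexit
  have hlim : Tendsto y (𝓝[<] c) (𝓝 (y c)) :=
    (hcont c (Ioc_subset_Icc_self hc)).mono_of_mem_nhdsWithin (Icc_mem_nhdsLT_of_mem hc)
  have hIoo : ∀ᶠ t in 𝓝[<] c, t ∈ Ioo a c := Ioo_mem_nhdsLT hc.1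
  have hIoo_sub : Ioo a c ⊆ Ioo a b := Ioo_subset_Ioo_right hc.2
  have hyG : ∀ᶠ t in 𝓝[<] c, y t ∈ G := hIoo.mono fun t ht => hbefore (Ioo_subset_Ico_self ht)
  refine (hV _ hfrontier).not_tendsto_of_fderiv_nonpos hyG
    (hIoo.mono fun t ht => hcont.continuousAt (Icc_mem_nhds ht.1 (hIoo_sub ht).2))
    (hIoo.mono fun t ht => hderiv t (hIoo_sub ht)) ?_ hlim
  filter_upwards [(tendsto_nhdsWithin_iff.2 ⟨hlim, hyG⟩).eventually (hsub _ hfrontier), hIoo]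
    with t hnonpos ht using hnonpos t (hIoo_sub ht)

end

/-- strong flow invariance. Under a family of bounding functions for
`G` satisfying the sub-tangential condition `⟪f(t,x), ∇V_u(x)⟫ ≤ 0` near each boundary
point, every solution of `ẏ = f(t,y)` starting in `G` remains in `G`. -/
theorem strong_flow_invariance_of_bounding_functions
    {N : ℕ} {T : ℝ} (hT : 0 < T)
    (Ω : Set (EuclideanSpace ℝ (Fin N))) (hΩ : IsOpen Ω)
    (f : ℝ → EuclideanSpace ℝ (Fin N) → EuclideanSpace ℝ (Fin N))
    (hf : ContinuousOn (fun p : ℝ × EuclideanSpace ℝ (Fin N) => f p.1 p.2)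
      (Icc (0 : ℝ) T ×ˢ Ω))
    (G : Set (EuclideanSpace ℝ (Fin N)))
    (hG : IsOpen G) (hGb : Bornology.IsBounded G) (hGΩ : closure G ⊆ Ω)
    (r : EuclideanSpace ℝ (Fin N) → ℝ)
    (V : EuclideanSpace ℝ (Fin N) → EuclideanSpace ℝ (Fin N) → ℝ)
    (hbd : ∀ u ∈ frontier G, 0 < r u ∧ ContDiffOn ℝ 1 (V u) (ball u (r u)) ∧
      V u u = 0 ∧ ∀ x ∈ G ∩ ball u (r u), V u x < 0)
    (hsub : ∀ u ∈ frontier G, ∃ ρ ∈ Ioc (0 : ℝ) (r u),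
      ∀ t ∈ Icc (0 : ℝ) T, ∀ x ∈ G ∩ ball u ρ,
        ⟪f t x, gradient (V u) x⟫ ≤ 0) :
    ∀ τ ∈ Ioc (0 : ℝ) T, ∀ y : ℝ → EuclideanSpace ℝ (Fin N),
      (∀ t ∈ Icc (0 : ℝ) τ, y t ∈ Ω) →
      (∀ t ∈ Icc (0 : ℝ) τ, HasDerivWithinAt y (f t (y t)) (Icc (0 : ℝ) τ) t) →
      y 0 ∈ G → ∀ t ∈ Icc (0 : ℝ) τ, y t ∈ G := by
  intro τ hτ y _ hy hy0
  exact strong_flow_invariance_of_bounding_functions_general (f := f) (V := V) hG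
    (fun u hu => let ⟨hr, hV, hu0, hneg⟩ := hbd u hu
      .of_differentiableOn hr (hV.differentiableOn one_ne_zero) hu0 hneg)
    (fun u hu => let ⟨_, hρ, hinner⟩ := hsub u hu
      eventually_fderiv_nonpos_of_inner_gradient_nonpos hρ.1 fun t ht =>
        hinner t ⟨ht.1.le, ht.2.le.trans hτ.2⟩)
    (fun t ht => (hy t ht).continuousWithinAt)
    (fun t ht => ((hy t (Ioo_subset_Icc_self ht)).hasDerivAt
      (Icc_mem_nhds ht.1 ht.2)).hasDerivWithinAt) hy0
end

section
/- Let Ω ⊆ ℝ^N be open, f : [0,T] × Ω → ℝ^N continuous, and G an open bounded set with cl(G) ⊆ Ω. Suppose there is a family (V_u)_{u∈∂G} of bounding functions for G such that for each u ∈ ∂G there exists ρ_u ∈ (0, r_u] with ⟨f(t,x), ∇V_u(x)⟩ ≤ 0 for all x ∈ G ∩ B(u, ρ_u) and all t ∈ [0,T]. Then cl(G) is weakly flow-invariant: for each x₀ ∈ ∂G there exists a differentiable y : [0,T] → Ω with y(0) = x₀, y'(t) = f(t, y(t)) for all t ∈ [0,T], and y(t) ∈ cl(G) for all t ∈ [0,T].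 -/
open Set Metric
open scoped RealInnerProductSpace

/-!
A solution that starts in the open set `G` cannot reach `∂G`: if `u` were the first boundary point
it meets, then `V_u` would be nonincreasing along the solution just before the hitting time, hence
bounded there by a negative value, whereas `V_u u = 0`. Starting points on `∂G` are approximated by
points of `G`. Since `f` is only continuous, solutions from the latter come from Peano's theorem,
applied to a bounded extension `F` of `f` to all of `ℝ × E`; they are equi-Lipschitz with constant
`‖F‖`, so a subsequence converges to a solution from the boundary point, and its values lie in
`cl G`, where `F` is `f`.
-/

section

open Filter Function Topology MeasureTheory
open scoped NNReal BoundedContinuousFunction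

theorem isCompact_setOf_lipschitzWith_apply_mem {X Y : Type*} [PseudoMetricSpace X]
    [PseudoMetricSpace Y] [ProperSpace Y] (K : ℝ≥0) (a : X) {Q : Set Y} (hQ : IsCompact Q)
    (hQc : IsClosed Q) :
    IsCompact {f : C(X, Y) | LipschitzWith K f ∧ f a ∈ Q} := by
  have himage : ContinuousMap.toFun '' {f : C(X, Y) | LipschitzWith K f ∧ f a ∈ Q} =
      {f : X → Y | LipschitzWith K f ∧ f a ∈ Q} :=
    Subset.antisymm (image_subset_iff.2 fun _ hf => hf)
      fun f hf => ⟨⟨f, hf.1.continuous⟩, hf, rfl⟩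
  have hclosed : IsClosed {f : X → Y | LipschitzWith K f ∧ f a ∈ Q} :=
    (isClosed_setOfPred_lipschitzWith K).inter (hQc.preimage (continuous_apply a))
  have hsub : {f : X → Y | LipschitzWith K f ∧ f a ∈ Q} ⊆
      univ.pi fun x => cthickening (K * dist x a) Q := fun f hf x _ =>
    mem_cthickening_of_dist_le _ _ _ _ hf.2 (hf.1.dist_le_mul x a)
  refine ArzelaAscoli.isCompact_of_equicontinuous _ ?_ ?_
  · rw [himage]
    exact (isCompact_univ_pi fun x => hQ.cthickening).of_isClosed_subset hclosed hsub
  · exact (LipschitzWith.uniformEquicontinuous _ K fun f => f.2.1).equicontinuous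

theorem exists_subseq_tendsto_of_lipschitzWith {X Y : Type*} [PseudoMetricSpace X] [ProperSpace X]
    [PseudoMetricSpace Y] [ProperSpace Y] {K : ℝ≥0} {y : ℕ → X → Y}
    (hy : ∀ n, LipschitzWith K (y n)) {a : X} (hb : Bornology.IsBounded (range fun n => y n a)) :
    ∃ (φ : ℕ → ℕ) (z : X → Y), StrictMono φ ∧ LipschitzWith K z ∧
      ∀ t, Tendsto (fun n => y (φ n) t) atTop (𝓝 (z t)) := by
  obtain ⟨z, hz, φ, hφ, hlim⟩ :=
    (isCompact_setOf_lipschitzWith_apply_mem K a hb.isCompact_closure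
      isClosed_closure).tendsto_subseq (x := fun n => ⟨y n, (hy n).continuous⟩)
      fun n => ⟨hy n, subset_closure (mem_range_self n)⟩
  exact ⟨φ, z, hφ, hz.1, fun t => ((continuous_eval_const t).tendsto z).comp hlim⟩

theorem tendsto_apply_of_lipschitzWith {ι X Y : Type*} [PseudoMetricSpace X] [PseudoMetricSpace Y]
    {l : Filter ι} {K : ℝ≥0} {y : ι → X → Y} (hy : ∀ i, LipschitzWith K (y i)) {a : X} {c : Y}
    (hlim : Tendsto (y · a) l (𝓝 c)) {p : ι → X} (hp : Tendsto p l (𝓝 a)) :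
    Tendsto (fun i => y i (p i)) l (𝓝 c) := by
  have hdist : Tendsto (fun i => dist (p i) a) l (𝓝 0) := tendsto_iff_dist_tendsto_zero.1 hp
  refine (tendsto_iff_of_dist (squeeze_zero (fun _ => dist_nonneg)
    (fun i => (hy i).dist_le_mul (p i) a) ?_)).2 hlim
  simpa only [mul_zero] using hdist.const_mul (K : ℝ)

theorem exists_boundedContinuousFunction_eqOn {X E : Type*} [TopologicalSpace X] [NormalSpace X]
    [NormedAddCommGroup E] [NormedSpace ℝ E] [FiniteDimensional ℝ E] {C : Set X} (hC : IsCompact C)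
    (hCc : IsClosed C) {g : X → E} (hg : ContinuousOn g C) : ∃ F : X →ᵇ E, EqOn F g C := by
  have : CompactSpace C := isCompact_iff_compactSpace.1 hC
  obtain ⟨F, -, hF⟩ := BoundedContinuousFunction.exists_norm_eq_domRestrict_eq hCc ℝ
    (.mkOfCompact ⟨C.domRestrict g, hg.domRestrict⟩)
  exact ⟨F, fun p hp => DFunLike.congr_fun hF ⟨p, hp⟩⟩

section IntegralEquation

variable {E : Type*} [NormedAddCommGroup E] [NormedSpace ℝ E] {F : ℝ × E →ᵇ E} {T δ : ℝ} {x : E}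
  {y : ℝ → E}

/-- `y` solves on `[0, T]` the integral equation with delay `δ` and initial value `x`. For `δ = 0`
this is the initial value problem `y' = F (t, y)`, `y 0 = x`; for `δ > 0` it is Tonelli's
approximation of that problem. -/
def IsDelaySolution (F : ℝ × E → E) (T δ : ℝ) (x : E) (y : ℝ → E) : Prop :=
  ∀ t ∈ Icc 0 T, y t = x + ∫ s in (0 : ℝ)..t, F (s, y (s - δ))

theorem IsDelaySolution.apply_zero {F : ℝ × E → E} (h : IsDelaySolution F T δ x y) (hT : 0 ≤ T) :
    y 0 = x := by
  simpa using h 0 (left_mem_Icc.2 hT)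

theorem IsDelaySolution.hasDerivWithinAt [CompleteSpace E] {F : ℝ × E → E} (hF : Continuous F)
    (hy : Continuous y) (h : IsDelaySolution F T 0 x y) {t : ℝ} (ht : t ∈ Icc 0 T) :
    HasDerivWithinAt y (F (t, y t)) (Icc 0 T) t := by
  simp only [IsDelaySolution, sub_zero] at h
  have hint : HasDerivAt (fun t => x + ∫ s in (0 : ℝ)..t, F (s, y s)) (F (t, y t)) t :=
    ((by fun_prop : Continuous fun s => F (s, y s)).integral_hasStrictDerivAt 0 t).hasDerivAt
      |>.const_add x
  exact hint.hasDerivWithinAt.congr h (h t ht)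

/-- The Picard operator of the integral equation with delay `δ`. Its values are constant on
`(-∞, 0]`, which provides the history needed by the delay. -/
noncomputable def delayPicard (F : ℝ × E → E) (δ : ℝ) (x : E) (y : ℝ → E) (t : ℝ) : E :=
  x + ∫ s in (0 : ℝ)..max t 0, F (s, y (s - δ))

theorem lipschitzWith_delayPicard (hy : Continuous y) :
    LipschitzWith ‖F‖₊ (delayPicard F δ x y) := by
  have hint (a b : ℝ) : IntervalIntegrable (fun s => F (s, y (s - δ))) volume a b :=
    (by fun_prop : Continuous fun s => F (s, y (s - δ))).intervalIntegrable a b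
  refine LipschitzWith.of_dist_le_mul fun s t => ?_
  calc dist (delayPicard F δ x y s) (delayPicard F δ x y t)
      = ‖∫ r in max t 0..max s 0, F (r, y (r - δ))‖ := by
        rw [delayPicard, delayPicard, dist_add_left, dist_eq_norm,
          intervalIntegral.integral_interval_sub_left (hint _ _) (hint _ _)]
    _ ≤ ‖F‖ * |max s 0 - max t 0| :=
        intervalIntegral.norm_integral_le_of_norm_le_const fun r _ => F.norm_coe_le_norm _
    _ ≤ ‖F‖₊ * dist s t :=
        mul_le_mul_of_nonneg_left (abs_max_sub_max_le_abs s t 0) (norm_nonneg F)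

theorem eqOn_delayPicard {F : ℝ × E → E} {w : ℝ → E} {c : ℝ} (hcδ : 0 ≤ c + δ)
    (h : EqOn y w (Iic c)) :
    EqOn (delayPicard F δ x y) (delayPicard F δ x w) (Iic (c + δ)) := by
  intro t ht
  refine congrArg (x + ·) (intervalIntegral.integral_congr fun s hs => ?_)
  have hs' : s - δ ≤ c := by
    rw [uIcc_of_le (le_max_right t 0)] at hs
    exact sub_le_iff_le_add.2 (hs.2.trans (max_le ht hcδ))
  exact congrArg (fun v => F (s, v)) (h hs')

-- Each application of the operator determines the solution on one more interval of length `δ`.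
theorem eqOn_iterate_delayPicard {F : ℝ × E → E} (hδ : 0 ≤ δ) (k : ℕ) :
    EqOn ((delayPicard F δ x)^[k + 1] fun _ => x) ((delayPicard F δ x)^[k] fun _ => x)
      (Iic (k * δ)) := by
  induction k with
  | zero =>
    intro t ht
    have ht0 : t ≤ 0 := by simpa using ht
    simp [delayPicard, ht0]
  | succ k ih =>
    have hk : ((k + 1 : ℕ) : ℝ) * δ = k * δ + δ := by push_cast; ring
    rw [iterate_succ_apply' _ k] at ih
    rw [iterate_succ_apply', iterate_succ_apply' _ k, hk]
    exact eqOn_delayPicard (by positivity) ih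

theorem exists_isDelaySolution_of_pos (F : ℝ × E →ᵇ E) (T : ℝ) (hδ : 0 < δ) (x : E) :
    ∃ y, LipschitzWith ‖F‖₊ y ∧ IsDelaySolution F T δ x y := by
  have hLip (k : ℕ) : LipschitzWith ‖F‖₊ ((delayPicard F δ x)^[k] fun _ => x) := by
    induction k with
    | zero => exact (LipschitzWith.const x).weaken zero_le
    | succ k ih => rw [iterate_succ_apply']; exact lipschitzWith_delayPicard ih.continuous
  obtain ⟨k, hk⟩ := exists_nat_ge (T / δ)
  refine ⟨_, hLip k, fun t ht => ?_⟩
  have htk : t ≤ k * δ := ht.2.trans ((div_le_iff₀ hδ).1 hk)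
  rw [← eqOn_iterate_delayPicard hδ.le k htk, iterate_succ_apply', delayPicard, max_eq_left ht.1]

variable {yn : ℕ → ℝ → E} {xn : ℕ → E} {δn : ℕ → ℝ}

theorem IsDelaySolution.of_tendsto (hyn : ∀ n, LipschitzWith ‖F‖₊ (yn n))
    (hsol : ∀ n, IsDelaySolution F T (δn n) (xn n) (yn n)) (hx : Tendsto xn atTop (𝓝 x))
    (hδ : Tendsto δn atTop (𝓝 δ)) (hlim : ∀ t, Tendsto (yn · t) atTop (𝓝 (y t))) :
    IsDelaySolution F T δ x y := by
  intro t ht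
  refine tendsto_nhds_unique (hlim t) ?_
  simp_rw [fun n => hsol n t ht]
  refine hx.add (intervalIntegral.tendsto_integral_filter_of_dominated_convergence (fun _ => ‖F‖)
    (Eventually.of_forall fun n => ?_)
    (Eventually.of_forall fun n => Eventually.of_forall fun s _ => F.norm_coe_le_norm _)
    intervalIntegrable_const (Eventually.of_forall fun s _ => ?_))
  · have := (hyn n).continuous
    exact Continuous.aestronglyMeasurable (by fun_prop)
  · have hdelay : Tendsto (fun n => yn n (s - δn n)) atTop (𝓝 (y (s - δ))) :=
      tendsto_apply_of_lipschitzWith hyn (hlim _) (hδ.const_sub s)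
    exact (F.continuous.tendsto _).comp (tendsto_const_nhds.prodMk_nhds hdelay)

theorem exists_subseq_tendsto_isDelaySolution [ProperSpace E] (hT : 0 ≤ T)
    (hyn : ∀ n, LipschitzWith ‖F‖₊ (yn n))
    (hsol : ∀ n, IsDelaySolution F T (δn n) (xn n) (yn n)) (hx : Tendsto xn atTop (𝓝 x))
    (hδ : Tendsto δn atTop (𝓝 δ)) :
    ∃ (φ : ℕ → ℕ) (y : ℝ → E), LipschitzWith ‖F‖₊ y ∧
      (∀ t, Tendsto (fun n => yn (φ n) t) atTop (𝓝 (y t))) ∧ IsDelaySolution F T δ x y := by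
  have hbdd : Bornology.IsBounded (range fun n => yn n 0) := by
    simpa only [fun n => (hsol n).apply_zero hT] using isBounded_range_of_tendsto xn hx
  obtain ⟨φ, y, hφ, hy, hlim⟩ := exists_subseq_tendsto_of_lipschitzWith hyn hbdd
  exact ⟨φ, y, hy, hlim, .of_tendsto (fun n => hyn (φ n)) (fun n => hsol (φ n))
    (hx.comp hφ.tendsto_atTop) (hδ.comp hφ.tendsto_atTop) hlim⟩

theorem exists_isDelaySolution_zero [ProperSpace E] (F : ℝ × E →ᵇ E) (hT : 0 ≤ T) (x : E) :
    ∃ y, LipschitzWith ‖F‖₊ y ∧ IsDelaySolution F T 0 x y := by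
  choose yn hyn hsol using fun n : ℕ =>
    exists_isDelaySolution_of_pos F T (Nat.one_div_pos_of_nat (α := ℝ) (n := n)) x
  obtain ⟨-, y, hy, -, h⟩ := exists_subseq_tendsto_isDelaySolution hT hyn hsol
    tendsto_const_nhds tendsto_one_div_add_atTop_nhds_zero_nat
  exact ⟨y, hy, h⟩

end IntegralEquation

theorem eventually_le_of_hasDerivAt_nonpos {φ φ' : ℝ → ℝ} {τ l : ℝ}
    (hφ : ∀ᶠ t in 𝓝[<] τ, HasDerivAt φ (φ' t) t) (hφ' : ∀ᶠ t in 𝓝[<] τ, φ' t ≤ 0)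
    (hl : Tendsto φ (𝓝[<] τ) (𝓝 l)) : ∀ᶠ t in 𝓝[<] τ, l ≤ φ t := by
  obtain ⟨b, hbτ, hb⟩ := mem_nhdsLT_iff_exists_Ico_subset.1 (hφ.and hφ')
  have hanti : AntitoneOn φ (Ico b τ) :=
    antitoneOn_of_hasDerivWithinAt_nonpos (convex_Ico b τ)
      (fun t ht => (hb ht).1.continuousAt.continuousWithinAt)
      (fun t ht => (hb (interior_subset ht)).1.hasDerivWithinAt)
      fun t ht => (hb (interior_subset ht)).2
  filter_upwards [Ico_mem_nhdsLT hbτ] with t ht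
  refine le_of_tendsto hl ?_
  filter_upwards [Ico_mem_nhdsLT ht.2] with s hs
  exact hanti ht ⟨ht.1.trans hs.1, hs.2⟩ hs.1

theorem exists_first_mem_frontier_of_not_mapsTo {X : Type*} [TopologicalSpace X] {y : ℝ → X}
    {G : Set X} {a b : ℝ} (hG : IsOpen G) (hy : ContinuousOn y (Icc a b)) (ha : y a ∈ G)
    (hexit : ¬MapsTo y (Icc a b) G) :
    ∃ τ ∈ Ioc a b, y τ ∈ frontier G ∧ MapsTo y (Ico a τ) G := by
  have hcompact : IsCompact (Icc a b ∩ y ⁻¹' Gᶜ) :=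
    isCompact_Icc.of_isClosed_subset
      (hy.preimage_isClosed_of_isClosed isClosed_Icc hG.isClosed_compl) inter_subset_left
  have hnonempty : (Icc a b ∩ y ⁻¹' Gᶜ).Nonempty := not_subset.1 hexit
  obtain ⟨τ, ⟨hτ, hτG⟩, hmin⟩ := hcompact.exists_isLeast hnonempty
  have hbefore : MapsTo y (Ico a τ) G := fun t ht => by
    by_contra htG
    exact (hmin ⟨⟨ht.1, ht.2.le.trans hτ.2⟩, htG⟩).not_gt ht.2
  have haτ : a < τ := hτ.1.lt_of_ne (by rintro rfl; exact hτG ha)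
  have hclosure : y τ ∈ closure G :=
    ((hy τ hτ).mono (Ico_subset_Icc_self.trans (Icc_subset_Icc_right hτ.2))).mem_closure
      (by rw [closure_Ico haτ.ne]; exact right_mem_Icc.2 haτ.le) hbefore
  exact ⟨τ, ⟨haτ, hτ.2⟩, hG.frontier_eq ▸ ⟨hclosure, hτG⟩, hbefore⟩

section BoundingFunction

variable {E : Type*} [NormedAddCommGroup E] [NormedSpace ℝ E] {f : ℝ → E → E} {T : ℝ} {G : Set E}

/-- `V` is a bounding function for `G` at `u`. Only its germ along `G` matters, so no ball is
singled out, `V` need not be `C¹`, and the value at `u` need not be normalized to `0`. -/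
structure IsBoundingFunctionAt_s9 (V : E → ℝ) (G : Set E) (u : E) : Prop where
  continuousWithinAt : ContinuousWithinAt V G u
  eventually_differentiableAt : ∀ᶠ x in 𝓝[G] u, DifferentiableAt ℝ V x
  eventually_lt : ∀ᶠ x in 𝓝[G] u, V x < V u

theorem isBoundingFunctionAt_of_contDiffOn {V : E → ℝ} {u : E} {s : Set E} (hs : s ∈ 𝓝 u)
    (hV : ContDiffOn ℝ 1 V s) (hlt : ∀ x ∈ G ∩ s, V x < V u) : IsBoundingFunctionAt_s9 V G u where
  continuousWithinAt := (hV.continuousOn.continuousAt hs).continuousWithinAt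
  eventually_differentiableAt := by
    filter_upwards [nhdsWithin_le_nhds (eventually_mem_nhds_iff.2 hs)] with x hx
    exact (hV.differentiableOn one_ne_zero).differentiableAt hx
  eventually_lt := mem_of_superset (inter_mem_nhdsWithin G hs) hlt

theorem IsBoundingFunctionAt_s9.not_tendsto {V : E → ℝ} {u : E} (hV : IsBoundingFunctionAt_s9 V G u)
    {y y' : ℝ → E} {τ : ℝ} (hyG : ∀ᶠ t in 𝓝[<] τ, y t ∈ G)
    (hy : ∀ᶠ t in 𝓝[<] τ, HasDerivAt y (y' t) t)
    (hVy : ∀ᶠ t in 𝓝[<] τ, fderiv ℝ V (y t) (y' t) ≤ 0) : ¬Tendsto y (𝓝[<] τ) (𝓝 u) := by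
  intro hlim
  have hlimG : Tendsto y (𝓝[<] τ) (𝓝[G] u) := tendsto_nhdsWithin_iff.2 ⟨hlim, hyG⟩
  have hderiv : ∀ᶠ t in 𝓝[<] τ, HasDerivAt (V ∘ y) (fderiv ℝ V (y t) (y' t)) t := by
    filter_upwards [hlimG.eventually hV.eventually_differentiableAt, hy] with t hVt hyt
    exact hVt.hasFDerivAt.comp_hasDerivAt t hyt
  have hge : ∀ᶠ t in 𝓝[<] τ, V u ≤ V (y t) :=
    eventually_le_of_hasDerivAt_nonpos hderiv hVy (hV.continuousWithinAt.tendsto.comp hlimG)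
  obtain ⟨t, hle, hlt⟩ := (hge.and (hlimG.eventually hV.eventually_lt)).exists
  exact hle.not_gt hlt

theorem mapsTo_of_isBoundingFunctionAt {a b : ℝ} (hG : IsOpen G)
    (hV : ∀ u ∈ frontier G, ∃ V, IsBoundingFunctionAt_s9 V G u ∧
      ∀ᶠ x in 𝓝[G] u, ∀ t ∈ Icc a b, fderiv ℝ V x (f t x) ≤ 0)
    {y : ℝ → E} (hyc : ContinuousOn y (Icc a b))
    (hy : ∀ t ∈ Ioo a b, y t ∈ G → HasDerivAt y (f t (y t)) t) (ha : y a ∈ G) :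
    MapsTo y (Icc a b) G := by
  by_contra hexit
  obtain ⟨τ, hτ, hfrontier, hbefore⟩ := exists_first_mem_frontier_of_not_mapsTo hG hyc ha hexit
  obtain ⟨V, hVu, hVf⟩ := hV _ hfrontier
  have hIoo : Ioo a τ ∈ 𝓝[<] τ := Ioo_mem_nhdsLT hτ.1
  have hyG : ∀ᶠ t in 𝓝[<] τ, y t ∈ G :=
    mem_of_superset hIoo fun t ht => hbefore (Ioo_subset_Ico_self ht)
  have hlim : Tendsto y (𝓝[<] τ) (𝓝 (y τ)) := by
    rw [← nhdsWithin_Ioo_eq_nhdsLT hτ.1]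
    exact (hyc τ (Ioc_subset_Icc_self hτ)).mono_left <| nhdsWithin_mono τ <|
      Ioo_subset_Icc_self.trans (Icc_subset_Icc_right hτ.2)
  refine hVu.not_tendsto (y' := fun t => f t (y t)) hyG ?_ ?_ hlim
  · filter_upwards [hIoo, hyG] with t ht htG
    exact hy t ⟨ht.1, ht.2.trans_le hτ.2⟩ htG
  · filter_upwards [(tendsto_nhdsWithin_iff.2 ⟨hlim, hyG⟩).eventually hVf, hIoo] with t htf ht
    exact htf t ⟨ht.1.le, ht.2.le.trans hτ.2⟩

theorem weak_flow_invariance_of_bounding_functions_general [FiniteDimensional ℝ E] (hT : 0 ≤ T)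
    (hf : ContinuousOn (uncurry f) (Icc 0 T ×ˢ closure G)) (hG : IsOpen G)
    (hGb : Bornology.IsBounded G)
    (hV : ∀ u ∈ frontier G, ∃ V, IsBoundingFunctionAt_s9 V G u ∧
      ∀ᶠ x in 𝓝[G] u, ∀ t ∈ Icc 0 T, fderiv ℝ V x (f t x) ≤ 0)
    {x₀ : E} (hx₀ : x₀ ∈ closure G) :
    ∃ y : ℝ → E, y 0 = x₀ ∧ ∀ t ∈ Icc 0 T,
      y t ∈ closure G ∧ HasDerivWithinAt y (f t (y t)) (Icc 0 T) t := by
  have : ProperSpace E := FiniteDimensional.proper_real E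
  obtain ⟨F, hFf⟩ := exists_boundedContinuousFunction_eqOn
    (isCompact_Icc.prod hGb.isCompact_closure) (isClosed_Icc.prod isClosed_closure) hf
  obtain ⟨x, hxG, hx⟩ := mem_closure_iff_seq_limit.1 hx₀
  choose yn hyn hsol using fun n => exists_isDelaySolution_zero F hT (x n)
  obtain ⟨φ, y, hy, hlim, hysol⟩ :=
    exists_subseq_tendsto_isDelaySolution hT hyn hsol hx tendsto_const_nhds
  have hynG (n : ℕ) : MapsTo (yn n) (Icc 0 T) G := by
    refine mapsTo_of_isBoundingFunctionAt hG hV (hyn n).continuous.continuousOn (fun t ht htG => ?_)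
      ((hsol n).apply_zero hT ▸ hxG n)
    have hFt : F (t, yn n t) = f t (yn n t) := hFf ⟨Ioo_subset_Icc_self ht, subset_closure htG⟩
    exact hFt ▸ ((hsol n).hasDerivWithinAt F.continuous (hyn n).continuous
      (Ioo_subset_Icc_self ht)).hasDerivAt (Icc_mem_nhds ht.1 ht.2)
  have hyG : MapsTo y (Icc 0 T) (closure G) := fun t ht =>
    mem_closure_of_tendsto (hlim t) (Eventually.of_forall fun n => hynG (φ n) ht)
  refine ⟨y, hysol.apply_zero hT, fun t ht => ⟨hyG ht, ?_⟩⟩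
  have hFt : F (t, y t) = f t (y t) := hFf ⟨ht, hyG ht⟩
  exact hFt ▸ hysol.hasDerivWithinAt F.continuous hy.continuous ht

end BoundingFunction

end

/-- weak flow invariance of the closure. Under a family of bounding
functions for `G` satisfying the sub-tangential condition near each boundary point,
from each point of `∂G` there starts at least one solution of `ẏ = f(t,y)` defined on
`[0,T]` and remaining in `cl G`. -/
theorem weak_flow_invariance_of_bounding_functions
    {N : ℕ} {T : ℝ} (hT : 0 < T)
    (Ω : Set (EuclideanSpace ℝ (Fin N))) (hΩ : IsOpen Ω)
    (f : ℝ → EuclideanSpace ℝ (Fin N) → EuclideanSpace ℝ (Fin N))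
    (hf : ContinuousOn (fun p : ℝ × EuclideanSpace ℝ (Fin N) => f p.1 p.2)
      (Icc (0 : ℝ) T ×ˢ Ω))
    (G : Set (EuclideanSpace ℝ (Fin N)))
    (hG : IsOpen G) (hGb : Bornology.IsBounded G) (hGΩ : closure G ⊆ Ω)
    (r : EuclideanSpace ℝ (Fin N) → ℝ)
    (V : EuclideanSpace ℝ (Fin N) → EuclideanSpace ℝ (Fin N) → ℝ)
    (hbd : ∀ u ∈ frontier G, 0 < r u ∧ ContDiffOn ℝ 1 (V u) (ball u (r u)) ∧
      V u u = 0 ∧ ∀ x ∈ G ∩ ball u (r u), V u x < 0)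
    (hsub : ∀ u ∈ frontier G, ∃ ρ ∈ Ioc (0 : ℝ) (r u),
      ∀ t ∈ Icc (0 : ℝ) T, ∀ x ∈ G ∩ ball u ρ,
        ⟪f t x, gradient (V u) x⟫ ≤ 0) :
    ∀ x₀ ∈ frontier G, ∃ y : ℝ → EuclideanSpace ℝ (Fin N),
      y 0 = x₀ ∧
      (∀ t ∈ Icc (0 : ℝ) T, y t ∈ Ω) ∧
      (∀ t ∈ Icc (0 : ℝ) T, HasDerivWithinAt y (f t (y t)) (Icc (0 : ℝ) T) t) ∧
      (∀ t ∈ Icc (0 : ℝ) T, y t ∈ closure G) := by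
  intro x₀ hx₀
  have hbounding : ∀ u ∈ frontier G, ∃ W, IsBoundingFunctionAt_s9 W G u ∧
      ∀ᶠ x in nhdsWithin u G, ∀ t ∈ Icc 0 T, fderiv ℝ W x (f t x) ≤ 0 := by
    intro u hu
    obtain ⟨hr, hV, hVu, hneg⟩ := hbd u hu
    obtain ⟨ρ, hρ, hVf⟩ := hsub u hu
    refine ⟨V u, isBoundingFunctionAt_of_contDiffOn (ball_mem_nhds u hr) hV (hVu ▸ hneg), ?_⟩
    filter_upwards [inter_mem_nhdsWithin G (ball_mem_nhds u hρ.1)] with x hx t ht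
    rw [← inner_gradient_left, real_inner_comm]
    exact hVf t ht x hx
  obtain ⟨y, hy0, hy⟩ := weak_flow_invariance_of_bounding_functions_general hT.le
    (hf.mono (prod_mono_right hGΩ)) hG hGb hbounding (frontier_subset_closure hx₀)
  exact ⟨y, hy0, fun t ht => hGΩ (hy t ht).1, fun t ht => (hy t ht).2, fun t ht => (hy t ht).1⟩
end
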